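/- arXiv:math/0204195 — 6 statements merged into one kernel-verified Lean document; each statement's English description precedes it below -/
import Mathlib

section
/- Let Γ be a subgroup of SL₂(ℂ) which is Zariski-dense. Then there exists an infinite set of pairwise multiplicatively independent complex numbers each of which occurs as an eigenvalue of some element of Γ (viewed as a 2×2 complex matrix). -/
/-- A subset of `SL₂(ℂ)` is Zariski-dense if every polynomial in the four matrix
entries vanishing on it vanishes on all of `SL₂(ℂ)`. -/
def ZariskiDenseSet (s : Set (Matrix.SpecialLinearGroup (Fin 2) ℂ)) : Prop :=
  ∀ p : MvPolynomial (Fin 2 × Fin 2) ℂ,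
    (∀ g ∈ s, MvPolynomial.eval (fun ij => (g : Matrix (Fin 2) (Fin 2) ℂ) ij.1 ij.2) p = 0) →
    ∀ g : Matrix.SpecialLinearGroup (Fin 2) ℂ,
      MvPolynomial.eval (fun ij => (g : Matrix (Fin 2) (Fin 2) ℂ) ij.1 ij.2) p = 0

/-- `lam` is an eigenvalue of `g ∈ SL₂(ℂ)`. -/
def IsEigenvalue (g : Matrix.SpecialLinearGroup (Fin 2) ℂ) (lam : ℂ) : Prop :=
  Matrix.det ((g : Matrix (Fin 2) (Fin 2) ℂ) - lam • 1) = 0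

/-- `x` and `y` are multiplicatively independent: there is no
`(p,q) ∈ ℤ×ℤ \ {(0,0)}` with `x^q = y^p`. -/
def MultIndep {K : Type*} [DivisionRing K] (x y : K) : Prop :=
  ∀ p q : ℤ, x ^ q = y ^ p → p = 0 ∧ q = 0

section

lemma arith3 (n a b c e f g : ℕ) (ha : n = a * e) (hb : n = b * f) (hc : n = c * g)
    (_ : 2 ≤ e) (hf : 2 ≤ f) (hg : 2 ≤ g) (h : a + b + c = n + 2) (ha3 : 3 ≤ a) (_ : 3 ≤ b) (_ : 3 ≤ c) :
    e ≤ 5 := by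
  by_contra hlt
  push Not at hlt
  have h1 : a * 6 ≤ n := by rw [ha]; exact Nat.mul_le_mul_left _ hlt
  rcases Nat.lt_or_ge f 3 with hf3 | hf3
  · obtain rfl : f = 2 := by omega
    rcases Nat.lt_or_ge g 3 with hg3 | hg3
    · obtain rfl : g = 2 := by omega
      omega
    · have : c * 3 ≤ n := by rw [hc]; exact Nat.mul_le_mul_left _ hg3
      omega
  · have : b * 3 ≤ n := by rw [hb]; exact Nat.mul_le_mul_left _ hf3
    rcases Nat.lt_or_ge g 3 with hg3 | hg3
    · obtain rfl : g = 2 := by omega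
      omega
    · have : c * 3 ≤ n := by rw [hc]; exact Nat.mul_le_mul_left _ hg3
      omega

open Classical in
lemma orbit_arith {Ω : Type*} [Fintype Ω] (n : ℕ) (hn : 1 < n) (d e : Ω → ℕ) (hde : ∀ w, n = d w * e w)
    (hsum : ∑ w, d w + 2 * (n - 1) = Fintype.card Ω * n) :
    (∃ w, d w ≤ 2 ∧ 0 < d w) ∨ ∀ w, e w ∣ 60 := by
  have hd0 : ∀ w, 0 < d w := fun w => Nat.pos_of_ne_zero fun h => by
    have := hde w; rw [h] at this; omega
  have he0 : ∀ w, 0 < e w := fun w => Nat.pos_of_ne_zero fun h => by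
    have := hde w; rw [h] at this; omega
  have hdn : ∀ w, d w ≤ n := fun w => by
    conv_rhs => rw [hde w]
    exact Nat.le_mul_of_pos_right _ (he0 w)
  by_cases hex : ∃ w, d w ≤ 2
  · obtain ⟨w, hw⟩ := hex
    exact Or.inl ⟨w, hw, hd0 w⟩
  right
  push Not at hex
  have h1 : ∑ w, (n - d w) = 2 * (n - 1) := by
    have : ∑ w, (n - d w) + ∑ w, d w = Fintype.card Ω * n := by
      rw [← Finset.sum_add_distrib]
      rw [Finset.sum_congr rfl (fun w _ => Nat.sub_add_cancel (hdn w))]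
      simp
    omega
  set B : Finset Ω := Finset.univ.filter (fun w => e w ≠ 1) with hB
  have h2 : ∑ w ∈ B, (n - d w) = 2 * (n - 1) := by
    rw [← h1, hB, Finset.sum_filter]
    refine Finset.sum_congr rfl fun w _ => ?_
    split_ifs with h
    · rfl
    · push Not at h
      have := hde w
      rw [h] at this
      omega
  have hBe : ∀ w ∈ B, 2 ≤ e w := fun w hw => by
    have := (Finset.mem_filter.1 hw).2
    have := he0 w
    omega
  have hlow : ∀ w ∈ B, n ≤ 2 * (n - d w) := fun w hw => by
    have : d w * 2 ≤ n := by
      conv_rhs => rw [hde w]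
      exact Nat.mul_le_mul_left _ (hBe w hw)
    omega
  have hc3 : B.card ≤ 3 := by
    by_contra hlt
    have : B.card * n ≤ 2 * ∑ w ∈ B, (n - d w) := by
      rw [Finset.mul_sum, ← smul_eq_mul]
      exact Finset.card_nsmul_le_sum _ _ _ hlow
    have h4 : 4 * n ≤ B.card * n := Nat.mul_le_mul_right _ (by omega)
    omega
  have key : ∀ w ∈ B, e w ≤ 5 := by
    obtain h | h | h | h : B.card = 0 ∨ B.card = 1 ∨ B.card = 2 ∨ B.card = 3 := by omega
    · rw [Finset.card_eq_zero] at h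
      rw [h] at h2
      simp at h2
      omega
    · obtain ⟨a, h⟩ := Finset.card_eq_one.1 h
      rw [h] at h2
      simp at h2
      have := hex a
      omega
    · obtain ⟨a, b, hab, h⟩ := Finset.card_eq_two.1 h
      rw [h, Finset.sum_pair hab] at h2
      have := hex a
      have := hex b
      omega
    · obtain ⟨a, b, c, hab, hac, hbc, h⟩ := Finset.card_eq_three.1 h
      have ha := hBe a (by simp [h])
      have hb := hBe b (by simp [h])
      have hc := hBe c (by simp [h])
      rw [h, Finset.sum_insert (by simp [hab, hac]), Finset.sum_pair hbc] at h2
      have h3 : d a + d b + d c = n + 2 := by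
        have := hdn a
        have := hdn b
        have := hdn c
        omega
      intro w hw
      rw [h] at hw
      simp only [Finset.mem_insert, Finset.mem_singleton] at hw
      have ea := hex a
      have eb := hex b
      have ec := hex c
      rcases hw with rfl | rfl | rfl
      · exact arith3 n _ _ _ _ _ _ (hde _) (hde b) (hde c) ha hb hc (by omega) ea eb ec
      · exact arith3 n _ _ _ _ _ _ (hde _) (hde a) (hde c) hb ha hc (by omega) eb ea ec
      · exact arith3 n _ _ _ _ _ _ (hde _) (hde a) (hde b) hc ha hb (by omega) ec ea eb
  intro w
  by_cases hw : w ∈ B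
  · have h5 := key w hw
    have h2 := hBe w hw
    interval_cases e w <;> decide
  · have : e w = 1 := by
      by_contra h
      exact hw (by simp [hB, h])
    rw [this]; decide

open Classical in
lemma burnside60 {G X : Type*} [Group G] [Finite G] [Finite X] [MulAction G X] [Nonempty X]
    (h2 : ∀ g : G, g ≠ 1 → Nat.card (MulAction.fixedBy X g) = 2) (x y : G) :
    ∃ P : X, x ^ 60 • P = P ∧ y ^ 60 • P = P := by
  have := Fintype.ofFinite G
  have := Fintype.ofFinite X
  by_cases hn : Nat.card G ≤ 1
  · have : Subsingleton G := (Finite.card_le_one_iff_subsingleton).1 hn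
    obtain ⟨P⟩ := ‹Nonempty X›
    exact ⟨P, by rw [Subsingleton.elim (x ^ 60) 1, one_smul], by rw [Subsingleton.elim (y ^ 60) 1, one_smul]⟩
  push Not at hn
  have hB := MulAction.sum_card_fixedBy_eq_card_orbits_mul_card_group G X
  have hC := MulAction.card_eq_sum_card_group_div_card_stabilizer G X
  have hde : ∀ w : Quotient (MulAction.orbitRel G X), Fintype.card G =
      (Fintype.card G / Fintype.card (MulAction.stabilizer G w.out)) * Fintype.card (MulAction.stabilizer G w.out) := by
    intro w
    rw [Nat.div_mul_cancel]
    rw [← Nat.card_eq_fintype_card, ← Nat.card_eq_fintype_card]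
    exact Subgroup.card_subgroup_dvd_card _
  have hsum := orbit_arith (Fintype.card G) (by rwa [← Nat.card_eq_fintype_card]) _ _ hde (by
    rw [← hC, ← hB, ← Finset.add_sum_erase _ _ (Finset.mem_univ (1:G))]
    congr 1
    · rw [← Nat.card_eq_fintype_card, ← Nat.card_eq_fintype_card]
      have : MulAction.fixedBy X (1:G) = Set.univ := by ext; simp
      rw [this]
      simp
    · rw [Finset.sum_congr rfl (g := fun _ => 2)]
      · simp [mul_comm]
      · intro g hg
        rw [← h2 g (Finset.mem_erase.1 hg).1, Nat.card_eq_fintype_card])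
  rcases hsum with ⟨w, hw, hw0⟩ | h
  · have hidx : (MulAction.stabilizer G w.out).index =
        Fintype.card G / Fintype.card (MulAction.stabilizer G w.out) := by
      have h1 := (MulAction.stabilizer G w.out).index_mul_card
      rw [Nat.card_eq_fintype_card, Nat.card_eq_fintype_card] at h1
      conv_rhs => rw [← h1]
      rw [Nat.mul_div_cancel _ Fintype.card_pos]
    have hsq : ∀ x : G, x ^ 60 ∈ MulAction.stabilizer G w.out := by
      intro x
      have h12 : (MulAction.stabilizer G w.out).index = 1 ∨ (MulAction.stabilizer G w.out).index = 2 := by omega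
      rcases h12 with h | h
      · rw [Subgroup.index_eq_one.1 h]; trivial
      · rw [show 60 = 2 * 30 by norm_num, pow_mul]
        exact pow_mem (Subgroup.sq_mem_of_index_two h x) _
    exact ⟨w.out, hsq x, hsq y⟩
  · have hone : ∀ x : G, x ^ 60 = 1 := by
      intro x
      by_cases hx : x = 1
      · simp [hx]
      have hne : Nonempty (MulAction.fixedBy X x) := by
        have := h2 x hx
        exact (Nat.card_pos_iff.1 (by omega)).1
      obtain ⟨P, hP⟩ := hne
      let w : Quotient (MulAction.orbitRel G X) := Quotient.mk _ P
      have hrel : (MulAction.orbitRel G X) w.out P := Quotient.exact (Quotient.out_eq w)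
      have hcard : Nat.card (MulAction.stabilizer G P) = Nat.card (MulAction.stabilizer G w.out) :=
        (Nat.card_congr (MulAction.stabilizerEquivStabilizerOfOrbitRel hrel).toEquiv).symm
      have h60 : Nat.card (MulAction.stabilizer G P) ∣ 60 := by
        rw [hcard, Nat.card_eq_fintype_card]; exact h w
      have hx' : (⟨x, hP⟩ : MulAction.stabilizer G P) ^ 60 = 1 := by
        obtain ⟨k, hk⟩ := h60
        rw [hk, pow_mul, pow_card_eq_one', one_pow]
      exact congrArg Subtype.val hx'
    obtain ⟨P⟩ := ‹Nonempty X›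
    exact ⟨P, by rw [hone, one_smul], by rw [hone, one_smul]⟩
open Matrix in
lemma tr_comm_formula {R : Type*} [CommRing R] (A B : SpecialLinearGroup (Fin 2) R) :
    ((A * B * A⁻¹ * B⁻¹ : SpecialLinearGroup (Fin 2) R) : Matrix (Fin 2) (Fin 2) R).trace =
    (A.1 * B.1 * A.1.adjugate * B.1.adjugate).trace := by
  simp

open Matrix in
lemma tr_comm_entries {R : Type*} [CommRing R] (A B : SpecialLinearGroup (Fin 2) R) :
    ((A * B * A⁻¹ * B⁻¹ : SpecialLinearGroup (Fin 2) R) : Matrix (Fin 2) (Fin 2) R).trace - 2 =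
    (A.1 0 1 * B.1 1 0 - A.1 1 0 * B.1 0 1)^2
      - (A.1 1 0 * (B.1 1 1 - B.1 0 0) - (A.1 1 1 - A.1 0 0) * B.1 1 0)
        * (A.1 0 1 * (B.1 1 1 - B.1 0 0) - (A.1 1 1 - A.1 0 0) * B.1 0 1) := by
  have hA := A.2
  have hB := B.2
  rw [det_fin_two] at hA hB
  rw [tr_comm_formula]
  simp only [Matrix.trace_fin_two, Matrix.adjugate_fin_two, Matrix.mul_apply, Fin.sum_univ_two]
  simp
  linear_combination (2 * (B.1 0 0 * B.1 1 1 - B.1 0 1 * B.1 1 0)) * hA + 2 * hB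

/-- `g` fixes the point `P` of the projective line. -/
def FixesPt {K : Type*} [Field K] (g : Matrix.SpecialLinearGroup (Fin 2) K) : OnePoint K → Prop
  | none => g.1 1 0 = 0
  | some z => g.1 1 0 * z ^ 2 + (g.1 1 1 - g.1 0 0) * z - g.1 0 1 = 0

lemma tr_comm_of_fixes {K : Type*} [Field K] (A B : Matrix.SpecialLinearGroup (Fin 2) K) (P : OnePoint K)
    (hA : FixesPt A P) (hB : FixesPt B P) :
    ((A * B * A⁻¹ * B⁻¹ : Matrix.SpecialLinearGroup (Fin 2) K) : Matrix (Fin 2) (Fin 2) K).trace = 2 := by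
  rw [← sub_eq_zero, tr_comm_entries]
  cases P with
  | infty =>
    change A.1 1 0 = 0 at hA
    change B.1 1 0 = 0 at hB
    rw [hA, hB]; ring
  | coe z =>
    change A.1 1 0 * z ^ 2 + (A.1 1 1 - A.1 0 0) * z - A.1 0 1 = 0 at hA
    change B.1 1 0 * z ^ 2 + (B.1 1 1 - B.1 0 0) * z - B.1 0 1 = 0 at hB
    have h1 : A.1 0 1 = A.1 1 0 * z ^ 2 + (A.1 1 1 - A.1 0 0) * z := by linear_combination -hA
    have h2 : B.1 0 1 = B.1 1 0 * z ^ 2 + (B.1 1 1 - B.1 0 0) * z := by linear_combination -hB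
    rw [h1, h2]; ring

open Classical in
noncomputable def permRep (K : Type*) [Field K] :
    Matrix.SpecialLinearGroup (Fin 2) K →* Equiv.Perm (OnePoint K) :=
  (MulAction.toPermHom (Matrix.GeneralLinearGroup (Fin 2) K) (OnePoint K)).comp
    Matrix.SpecialLinearGroup.toGL

lemma permRep_fixes {K : Type*} [Field K] (g : Matrix.SpecialLinearGroup (Fin 2) K) (P : OnePoint K) :
    permRep K g P = P ↔ FixesPt g P := by
  classical
  have hsm : permRep K g P = (Matrix.SpecialLinearGroup.toGL g) • P := by
    simp only [permRep, MonoidHom.comp_apply, MulAction.toPermHom_apply, MulAction.toPerm_apply]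

  rw [hsm]
  cases P with
  | infty =>
    rw [OnePoint.smul_infty_eq_self_iff]
    exact Iff.rfl
  | coe z =>
    rw [← Matrix.GeneralLinearGroup.fixpointPolynomial_aeval_eq_zero_iff]
    simp [Matrix.GeneralLinearGroup.fixpointPolynomial]
    rfl

/-- split with distinct eigenvalues: exactly two fixed points -/
lemma card_fixes {K : Type*} [Field K] (g : Matrix.SpecialLinearGroup (Fin 2) K)
    (lam : K) (hl : lam ^ 2 - g.1.trace * lam + 1 = 0) (hd : g.1.trace ^ 2 - 4 ≠ 0) :
    Set.ncard {P : OnePoint K | FixesPt g P} = 2 := by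
  have hdet := g.2
  rw [Matrix.det_fin_two] at hdet
  rw [Matrix.trace_fin_two] at hl hd
  have hx : ∀ x : K, FixesPt g (x : OnePoint K) ↔ g.1 1 0 * x ^ 2 + (g.1 1 1 - g.1 0 0) * x - g.1 0 1 = 0 :=
    fun x => Iff.rfl
  have hinf : FixesPt g OnePoint.infty ↔ g.1 1 0 = 0 := Iff.rfl
  set a := g.1 0 0
  set b := g.1 0 1
  set c := g.1 1 0
  set d := g.1 1 1
  rw [Set.ncard_eq_two]
  by_cases hc : c = 0
  · have had : d - a ≠ 0 := by
      intro h
      apply hd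
      rw [hc] at hdet
      linear_combination 4 * hdet + (d-a) * h
    refine ⟨OnePoint.infty, ((b / (d - a) : K) : OnePoint K), by simp, ?_⟩
    ext P
    simp only [Set.mem_ofPred_eq, Set.mem_insert_iff, Set.mem_singleton_iff]
    cases P with
    | infty => simp [hinf, hc]
    | coe x =>
      rw [hx, hc]
      simp only [OnePoint.coe_ne_infty, OnePoint.coe_eq_coe, false_or]
      rw [eq_div_iff had]
      constructor <;> intro h <;> linear_combination h
  · have hs : (2 * lam - (a + d)) ^ 2 = (a + d) ^ 2 - 4 := by linear_combination 4 * hl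
    have hs0 : 2 * lam - (a + d) ≠ 0 := by
      intro h
      rw [h] at hs
      exact hd (by rw [← hs]; ring)
    refine ⟨(((lam - d) / c : K) : OnePoint K), (((a - lam) / c : K) : OnePoint K), ?_, ?_⟩
    · rw [Ne, OnePoint.coe_eq_coe, div_left_inj' hc]
      intro h
      exact hs0 (by linear_combination h)
    · ext P
      simp only [Set.mem_ofPred_eq, Set.mem_insert_iff, Set.mem_singleton_iff]
      cases P with
      | infty => simp [hinf, hc]
      | coe x =>
        rw [hx]
        simp only [OnePoint.coe_eq_coe]
        rw [eq_div_iff hc, eq_div_iff hc, ← sub_eq_zero (a := x * c), ← sub_eq_zero (a := x * c) (b := a - lam),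
          ← mul_eq_zero]
        constructor
        · intro h
          linear_combination c * h - hdet - hl
        · intro h
          apply mul_left_cancel₀ hc
          linear_combination h + hdet + hl

lemma matrix_eq_one_or {K : Type*} [Field K] (g : Matrix.SpecialLinearGroup (Fin 2) K) (P : OnePoint K)
    (h : ¬ FixesPt g P) : g.1 1 0 ≠ 0 ∨ g.1 0 1 ≠ 0 ∨ g.1 0 0 ≠ g.1 1 1 := by
  by_contra hcon
  push Not at hcon
  obtain ⟨h1, h2, h3⟩ := hcon
  apply h
  cases P with
  | infty => exact h1
  | coe z =>
    change g.1 1 0 * z ^ 2 + (g.1 1 1 - g.1 0 0) * z - g.1 0 1 = 0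
    rw [h1, h2, h3]; ring

lemma exists_nonsplit (p : ℕ) [Fact p.Prime] :
    ∃ t : ZMod p, ∀ l : ZMod p, l ^ 2 - t * l + 1 ≠ 0 := by
  by_contra hcon
  push Not at hcon
  choose l hl using hcon
  have h0 : ∀ t, l t ≠ 0 := by
    intro t h
    have := hl t
    rw [h] at this
    simp at this
  have hinj : Function.Injective l := by
    intro s t hst
    have h1 := hl s
    have h2 := hl t
    rw [hst] at h1
    have : (t - s) * l t = 0 := by linear_combination h1 - h2
    rcases mul_eq_zero.1 this with h | h
    · exact (sub_eq_zero.1 h).symm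
    · exact absurd h (h0 t)
  obtain ⟨t, ht⟩ := (Finite.injective_iff_surjective.1 hinj) 0
  exact h0 t ht

open Matrix in
lemma unip_pow {K : Type*} [Field K] (v : Matrix (Fin 2) (Fin 2) K) (hv : (v - 1) * (v - 1) = 0) (m : ℕ) :
    v ^ m = 1 + (m : K) • (v - 1) := by
  induction m with
  | zero => simp
  | succ m ih =>
    rw [pow_succ, ih]
    have : v = 1 + (v - 1) := by abel
    conv_lhs => rw [this]
    simp only [add_sub_cancel_left]
    rw [add_mul, one_mul, mul_add, mul_one, smul_mul_assoc, hv]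
    push_cast
    rw [add_smul]
    simp only [smul_zero, add_zero, one_smul]
    abel

open Matrix in
/-- main finite statement: unipotent case -/
lemma unip_case (p : ℕ) [Fact p.Prime] (G : Subgroup (SpecialLinearGroup (Fin 2) (ZMod p)))
    (hG : ∀ g ∈ G, ∃ l : ZMod p, l ^ 2 - g.1.trace * l + 1 = 0)
    (v : SpecialLinearGroup (Fin 2) (ZMod p)) (hv : v ∈ G) (htr : v.1.trace = 2)
    (hne : v.1 1 0 ≠ 0 ∨ v.1 0 1 ≠ 0 ∨ v.1 0 0 ≠ v.1 1 1) :
    ∃ P, ∀ g ∈ G, FixesPt g P := by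
  have hdet := v.2
  rw [det_fin_two] at hdet
  rw [trace_fin_two] at htr
  have hsq : (v.1 - 1) * (v.1 - 1) = 0 := by
    ext i j
    fin_cases i <;> fin_cases j <;> simp [Matrix.mul_apply, Fin.sum_univ_two] <;> grind
  have hk : ∀ g ∈ G, ((v.1 - 1) * (g.1 * (v.1 - 1) * g.1.adjugate)).trace = 0 := by
    intro g hg
    by_contra hk
    set k := ((v.1 - 1) * (g.1 * (v.1 - 1) * g.1.adjugate)).trace with hkdef
    obtain ⟨t, ht⟩ := exists_nonsplit p
    let m : ℕ := ((t - 2) / k).val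
    have hm : (m : ZMod p) = (t - 2) / k := ZMod.natCast_zmod_val _
    obtain ⟨l, hl⟩ := hG (v ^ m * (g * v * g⁻¹)) (G.mul_mem (G.pow_mem hv m) (G.mul_mem (G.mul_mem hg hv) (G.inv_mem hg)))
    apply ht l
    rw [← hl]
    congr 3
    have h1 : ((v ^ m * (g * v * g⁻¹) : SpecialLinearGroup (Fin 2) (ZMod p)) : Matrix (Fin 2) (Fin 2) (ZMod p))
      = (1 + (m : ZMod p) • (v.1 - 1)) * (g.1 * v.1 * g.1.adjugate) := by
      rw [← unip_pow _ hsq]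
      simp
    have h3 : g.1 * v.1 * g.1.adjugate = 1 + g.1 * (v.1 - 1) * g.1.adjugate := by
      rw [mul_sub, sub_mul, mul_one, mul_adjugate, g.2, one_smul]
      abel
    have htr0 : (v.1 - 1).trace = 0 := by
      rw [trace_fin_two]
      simp
      linear_combination htr
    have htr1 : (g.1 * (v.1 - 1) * g.1.adjugate).trace = 0 := by
      rw [trace_mul_comm, ← mul_assoc, adjugate_mul, g.2, one_smul, one_mul, htr0]
    rw [h1, h3, add_mul, one_mul, mul_add, mul_one, trace_add, trace_add, trace_add, htr1, smul_mul_assoc,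
      trace_smul, trace_smul, htr0, ← hkdef, hm, trace_one]
    simp [hk]
  by_cases hc : v.1 1 0 = 0
  · have ha : v.1 0 0 = 1 := by
      rw [hc] at hdet
      have : (v.1 0 0 - 1)^2 = 0 := by linear_combination v.1 0 0 * htr - hdet
      exact sub_eq_zero.1 (pow_eq_zero_iff (two_ne_zero) |>.1 this)
    have hd : v.1 1 1 = 1 := by linear_combination htr - ha
    have hb : v.1 0 1 ≠ 0 := by
      rcases hne with h | h | h
      · exact absurd hc h
      · exact h
      · exact absurd (ha.trans hd.symm) h
    refine ⟨OnePoint.infty, fun g hg => ?_⟩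
    have h := hk g hg
    change g.1 1 0 = 0
    rw [trace_fin_two] at h
    simp [Matrix.mul_apply, Fin.sum_univ_two, adjugate_fin_two, ha, hd, hc, hb] at h
    exact h
  · refine ⟨(((v.1 0 0 - 1) / v.1 1 0 : ZMod p) : OnePoint (ZMod p)), fun g hg => ?_⟩
    have h := hk g hg
    change g.1 1 0 * ((v.1 0 0 - 1) / v.1 1 0) ^ 2 + (g.1 1 1 - g.1 0 0) * ((v.1 0 0 - 1) / v.1 1 0) - g.1 0 1 = 0
    set z := (v.1 0 0 - 1) / v.1 1 0 with hz
    have ha : v.1 0 0 = 1 + z * v.1 1 0 := by rw [hz]; field_simp; ring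
    have hd : v.1 1 1 = 1 - z * v.1 1 0 := by linear_combination htr - ha
    have hb : v.1 0 1 = - z ^ 2 * v.1 1 0 := by
      apply mul_right_cancel₀ hc
      rw [ha, hd] at hdet
      linear_combination - hdet
    rw [trace_fin_two] at h
    simp [Matrix.mul_apply, Fin.sum_univ_two, adjugate_fin_two, ha, hd, hb] at h
    have h' : (v.1 1 0)^2 * (g.1 1 0 * z ^ 2 + (g.1 1 1 - g.1 0 0) * z - g.1 0 1)^2 = 0 := by
      linear_combination -h
    rcases mul_eq_zero.1 h' with h | h
    · exact absurd (pow_eq_zero_iff (two_ne_zero) |>.1 h) hc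
    · exact (pow_eq_zero_iff (two_ne_zero) |>.1 h)

open Matrix in
theorem finite_case (p : ℕ) [Fact p.Prime] (h2 : (2 : ZMod p) ≠ 0) (G : Subgroup (SpecialLinearGroup (Fin 2) (ZMod p)))
    (hG : ∀ g ∈ G, ∃ l : ZMod p, l ^ 2 - g.1.trace * l + 1 = 0)
    (x y : SpecialLinearGroup (Fin 2) (ZMod p)) (hx : x ∈ G) (hy : y ∈ G) :
    ((x ^ 60 * y ^ 60 * (x ^ 60)⁻¹ * (y ^ 60)⁻¹ : SpecialLinearGroup (Fin 2) (ZMod p)) :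
      Matrix (Fin 2) (Fin 2) (ZMod p)).trace = 2 := by
  suffices h : ∃ P, FixesPt (x ^ 60) P ∧ FixesPt (y ^ 60) P by
    obtain ⟨P, h1, h3⟩ := h
    exact tr_comm_of_fixes _ _ P h1 h3
  by_cases hu : ∃ u ∈ G, u.1.trace ^ 2 - 4 = 0 ∧ (u.1 1 0 ≠ 0 ∨ u.1 0 1 ≠ 0 ∨ u.1 0 0 ≠ u.1 1 1)
  · obtain ⟨u, huG, hut, hun⟩ := hu
    have hdet := u.2
    rw [det_fin_two] at hdet
    have ht0 : u.1.trace ≠ 0 := by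
      intro h
      rw [h] at hut
      have : (2 : ZMod p) * 2 = 0 := by linear_combination -hut
      rcases mul_eq_zero.1 this with h | h <;> exact h2 h
    rw [trace_fin_two] at hut ht0
    obtain ⟨P, hP⟩ := unip_case p G hG (u * u) (G.mul_mem huG huG) (by
      rw [trace_fin_two]
      simp [Matrix.mul_apply, Fin.sum_univ_two]
      linear_combination hut - 2 * hdet) (by
      have e1 : (u * u).1 1 0 = (u.1 0 0 + u.1 1 1) * u.1 1 0 := by
        simp [Matrix.mul_apply, Fin.sum_univ_two]; ring
      have e2 : (u * u).1 0 1 = (u.1 0 0 + u.1 1 1) * u.1 0 1 := by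
        simp [Matrix.mul_apply, Fin.sum_univ_two]; ring
      have e3 : (u * u).1 0 0 - (u * u).1 1 1 = (u.1 0 0 + u.1 1 1) * (u.1 0 0 - u.1 1 1) := by
        simp [Matrix.mul_apply, Fin.sum_univ_two]; ring
      rw [e1, e2, ← sub_ne_zero (b := (u * u).1 1 1), e3]
      rcases hun with h | h | h
      · exact Or.inl (mul_ne_zero ht0 h)
      · exact Or.inr (Or.inl (mul_ne_zero ht0 h))
      · exact Or.inr (Or.inr (mul_ne_zero ht0 (sub_ne_zero.2 h))))
    exact ⟨P, hP _ (G.pow_mem hx _), hP _ (G.pow_mem hy _)⟩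
  · push Not at hu
    have : Finite (OnePoint (ZMod p)) := inferInstanceAs (Finite (Option (ZMod p)))
    let H : Subgroup (Equiv.Perm (OnePoint (ZMod p))) := G.map (permRep (ZMod p))
    have key := burnside60 (G := H) (X := OnePoint (ZMod p)) (by
      rintro ⟨h, g, hg, rfl⟩ hne
      have hmoved : ∃ P, ¬ FixesPt g P := by
        by_contra hcon
        push Not at hcon
        apply hne
        ext P
        exact (permRep_fixes g P).2 (hcon P)
      obtain ⟨P, hP⟩ := hmoved
      obtain ⟨l, hl⟩ := hG g hg
      have hd : g.1.trace ^ 2 - 4 ≠ 0 := by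
        intro h0
        have := hu g hg h0
        rcases matrix_eq_one_or g P hP with h | h | h
        · exact h this.1
        · exact h this.2.1
        · exact h this.2.2
      have h3 := card_fixes g l hl hd
      refine Eq.trans ?_ h3
      rw [← Nat.card_coe_set_eq]
      congr 2
      ext Q
      exact permRep_fixes g Q) ⟨_, x, hx, rfl⟩ ⟨_, y, hy, rfl⟩
    obtain ⟨P, h1, h3⟩ := key
    refine ⟨P, ?_, ?_⟩
    · rw [← permRep_fixes, map_pow]; exact h1
    · rw [← permRep_fixes, map_pow]; exact h3

end

section
open Polynomial

lemma exists_prime_dvd_value (f : ℤ[X]) (hf : 0 < f.natDegree) (N : ℤ) (hN : N ≠ 0) :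
    ∃ p : ℕ, p.Prime ∧ ¬ (p : ℤ) ∣ N ∧ ∃ n : ℤ, (p : ℤ) ∣ f.eval n := by
  by_cases hc : f.eval 0 = 0
  · obtain ⟨p, hp, hpp⟩ := Nat.exists_infinite_primes (N.natAbs + 1)
    refine ⟨p, hpp, fun h => ?_, 0, by rw [hc]; exact dvd_zero _⟩
    have := Nat.le_of_dvd (Int.natAbs_pos.2 hN) (Int.natCast_dvd.1 h)
    omega
  set c := f.eval 0 with hcdef
  have hfin : ∀ a : ℤ, {k : ℤ | f.eval (c * N * k) = a}.Finite := by
    intro a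
    have hne : f.comp (C (c * N) * X) - C a ≠ 0 := by
      intro h
      have h1 : (f.comp (C (c * N) * X)).natDegree = f.natDegree := by
        rw [natDegree_comp, natDegree_C_mul (mul_ne_zero hc hN)]; simp
      rw [sub_eq_zero.1 h] at h1
      simp at h1
      omega
    refine (finite_setOfPred_isRoot hne).subset ?_
    intro k hk
    have hk' : f.eval (c * N * k) = a := hk
    change IsRoot _ k
    simp [hk']
  obtain ⟨k, hk⟩ := ((hfin c).union (hfin (-c))).infinite_compl.nonempty
  have hk1 : f.eval (c * N * k) ≠ c := fun h => hk (Or.inl h)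
  have hk2 : f.eval (c * N * k) ≠ -c := fun h => hk (Or.inr h)
  obtain ⟨r, hr⟩ : c * N * k - 0 ∣ f.eval (c * N * k) - f.eval 0 := sub_dvd_eval_sub _ _ _
  rw [sub_zero] at hr
  have hval : f.eval (c * N * k) = c * (1 + N * (k * r)) := by linear_combination hr
  have hg : (1 + N * (k * r)).natAbs ≠ 1 := by
    intro h
    rcases Int.natAbs_eq_iff.1 h with h | h
    · rw [h] at hval; exact hk1 (by rw [hval]; simp)
    · rw [h] at hval; exact hk2 (by rw [hval]; simp)
  obtain ⟨p, hp, hpd⟩ := Nat.exists_prime_and_dvd hg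
  rw [← Int.natCast_dvd] at hpd
  refine ⟨p, hp, fun h => ?_, c * N * k, by rw [hval]; exact hpd.mul_left _⟩
  have : (p : ℤ) ∣ 1 := (Int.dvd_add_left (h.mul_right _)).1 hpd
  have := Int.le_of_dvd one_pos this
  have := hp.two_le
  omega

lemma clear_den (q : ℚ[X]) : ∃ (Q : ℤ[X]) (d : ℤ), d ≠ 0 ∧ Q.map (Int.castRingHom ℚ) = C (d : ℚ) * q := by
  obtain ⟨b, hb0, hb⟩ := IsLocalization.integerNormalization_spec (nonZeroDivisors ℤ) q
  refine ⟨IsLocalization.integerNormalization (nonZeroDivisors ℤ) q, b, nonZeroDivisors.ne_zero hb0, ?_⟩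
  rw [← algebraMap_int_eq, hb]
  ext i
  simp

lemma padic_embed (L : Type*) [Field L] [NumberField L] (s : Finset L) :
    ∃ p : ℕ, ∃ _ : Fact p.Prime, p ≠ 2 ∧ ∃ σ : L →+* ℚ_[p], ∀ c ∈ s, ‖σ c‖ ≤ 1 := by
  classical
  let pb := Field.powerBasisOfFiniteOfSeparable ℚ L
  obtain ⟨F, b, hb, hF⟩ := clear_den (minpoly ℚ pb.gen)
  have hirr : Irreducible (minpoly ℚ pb.gen) := minpoly.irreducible (Algebra.IsIntegral.isIntegral _)
  obtain ⟨u, v, huv⟩ := hirr.separable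
  obtain ⟨U, d1, hd1, hU⟩ := clear_den u
  obtain ⟨V, d2, hd2, hV⟩ := clear_den v
  have hinj : Function.Injective (Polynomial.map (Int.castRingHom ℚ)) :=
    Polynomial.map_injective _ (RingHom.injective_int _)
  have hbez : (C d2 * U) * F + (C d1 * V) * derivative F = C (d1 * d2 * b) := by
    apply hinj
    simp only [Polynomial.map_add, Polynomial.map_mul, ← derivative_map, hU, hV, hF, map_C, derivative_C_mul]
    simp only [eq_intCast, Int.cast_mul, C_mul]
    linear_combination (C (d1:ℚ) * C (d2:ℚ) * C (b:ℚ)) * huv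
  have hdeg : 0 < F.natDegree := by
    have h1 : (F.map (Int.castRingHom ℚ)).natDegree = F.natDegree :=
      natDegree_map_eq_of_injective (RingHom.injective_int _) _
    rw [← h1, hF, natDegree_C_mul (by exact_mod_cast hb)]
    exact minpoly.natDegree_pos (Algebra.IsIntegral.isIntegral _)
  have hq : ∀ c : L, ∃ (Q : ℤ[X]) (d : ℤ), d ≠ 0 ∧ (d : L) * c = aeval pb.gen Q := by
    intro c
    obtain ⟨q, hq⟩ := pb.exists_eq_aeval' c
    obtain ⟨Q, d, hd, hQ⟩ := clear_den q
    refine ⟨Q, d, hd, ?_⟩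
    have := congrArg (aeval pb.gen) hQ
    rw [← algebraMap_int_eq, aeval_map_algebraMap] at this
    rw [this, hq]
    simp
  choose Q d hd hQ using hq
  obtain ⟨p, hp, hpN, n, hn⟩ := exists_prime_dvd_value F hdeg (2 * (d1 * d2 * b) * ∏ c ∈ s, d c)
    (mul_ne_zero (mul_ne_zero two_ne_zero (mul_ne_zero (mul_ne_zero hd1 hd2) hb))
      (Finset.prod_ne_zero_iff.2 fun c _ => hd c))
  have : Fact p.Prime := ⟨hp⟩
  have hp2 : p ≠ 2 := by
    rintro rfl
    exact hpN ((dvd_mul_right _ _).mul_right _)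
  refine ⟨p, this, hp2, ?_⟩
  have hderiv : ¬ (p : ℤ) ∣ (derivative F).eval n := by
    intro h
    apply hpN
    have h1 := congrArg (Polynomial.eval n) hbez
    simp only [eval_add, eval_mul, eval_C] at h1
    rw [← h1]
    exact ((((hn.mul_left _).add (h.mul_left _))).mul_left _).mul_right _
  have haev : ∀ G : ℤ[X], aeval (n : ℤ_[p]) G = ((G.eval n : ℤ) : ℤ_[p]) := by
    intro G
    have := aeval_algebraMap_apply ℤ_[p] n G
    simpa using this
  have hnorm : ‖F.aeval (n : ℤ_[p])‖ < ‖F.derivative.aeval (n : ℤ_[p])‖ ^ 2 := by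
    have h1 : ‖F.derivative.aeval (n : ℤ_[p])‖ = 1 := by
      rw [haev]
      have := PadicInt.norm_int_lt_one_iff_dvd (p := p) ((derivative F).eval n)
      exact le_antisymm (PadicInt.norm_le_one _) (not_lt.1 fun h => hderiv (this.1 h))
    rw [h1, haev, one_pow]
    exact (PadicInt.norm_int_lt_one_iff_dvd _).2 hn
  obtain ⟨z, hz, -⟩ := hensels_lemma hnorm
  have hz' : aeval (z : ℚ_[p]) (minpoly ℚ pb.gen) = 0 := by
    have h1 : aeval (z : ℚ_[p]) F = 0 := by
      have := aeval_algebraMap_apply ℚ_[p] z F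
      rw [hz, map_zero] at this
      exact this
    have h2 := congrArg (aeval (z : ℚ_[p])) hF
    rw [← algebraMap_int_eq, aeval_map_algebraMap, h1, map_mul, aeval_C] at h2
    rcases mul_eq_zero.1 h2.symm with h | h
    · exfalso; apply hb
      simpa using h
    · exact h
  let σ : L →ₐ[ℚ] ℚ_[p] := pb.lift (z : ℚ_[p]) hz'
  refine ⟨σ.toRingHom, fun c hc => ?_⟩
  change ‖σ c‖ ≤ 1
  have hσ : σ pb.gen = z := pb.lift_gen _ _
  have h1 : (d c : ℚ_[p]) * σ c = aeval (z : ℚ_[p]) (Q c) := by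
    have := congrArg σ (hQ c)
    rw [map_mul, map_intCast] at this
    rw [this, ← hσ]
    exact (aeval_algHom_apply (σ.restrictScalars ℤ) pb.gen (Q c)).symm
  have h2 : aeval (z : ℚ_[p]) (Q c) = ((aeval z (Q c) : ℤ_[p]) : ℚ_[p]) :=
    aeval_algebraMap_apply ℚ_[p] z (Q c)
  have h3 : ‖(d c : ℚ_[p])‖ = 1 := by
    refine le_antisymm (Padic.norm_int_le_one _) (not_lt.1 fun h => hpN ?_)
    have := Padic.norm_intCast_lt_one_iff.1 h
    exact (this.trans (Finset.dvd_prod_of_mem _ hc)).mul_left _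
  have h4 := congrArg norm h1
  rw [norm_mul, h3, one_mul, h2] at h4
  rw [h4]
  exact PadicInt.norm_le_one _

lemma tr_map {R S : Type*} [CommRing R] [CommRing S] (f : R →+* S) (g : Matrix.SpecialLinearGroup (Fin 2) R) :
    (Matrix.SpecialLinearGroup.map f g).1.trace = f g.1.trace := by
  simp [Matrix.trace_fin_two]

lemma map_closure_pair {G H : Type*} [Group G] [Group H] (f : G →* H) (x y : G) :
    (Subgroup.closure {x, y}).map f = Subgroup.closure {f x, f y} := by
  rw [MonoidHom.map_closure, Set.image_pair]

lemma lift_SL {R S : Type*} [CommRing R] [CommRing S] (f : R →+* S) (hf : Function.Injective f)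
    (g : Matrix.SpecialLinearGroup (Fin 2) S) (h : ∀ i j, ∃ r, f r = g.1 i j) :
    ∃ g' : Matrix.SpecialLinearGroup (Fin 2) R, Matrix.SpecialLinearGroup.map f g' = g := by
  choose r hr using h
  refine ⟨⟨Matrix.of r, ?_⟩, ?_⟩
  · apply hf
    have := g.2
    rw [Matrix.det_fin_two] at this ⊢
    simp [hr, this]
  · apply Subtype.ext
    ext i j
    exact hr i j

/-- the word used: the commutator of the sixtieth powers -/
def word60 {G : Type*} [Group G] (x y : G) : G := x ^ 60 * y ^ 60 * (x ^ 60)⁻¹ * (y ^ 60)⁻¹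

lemma map_word60 {G H : Type*} [Group G] [Group H] (f : G →* H) (x y : G) :
    f (word60 x y) = word60 (f x) (f y) := by
  simp [word60]

theorem nf_case (L : Type*) [Field L] [NumberField L] (x y : Matrix.SpecialLinearGroup (Fin 2) L)
    (h : ∀ g ∈ Subgroup.closure {x, y}, ∃ l : L, l ^ 2 - g.1.trace * l + 1 = 0) :
    (word60 x y).1.trace = 2 := by
  classical
  by_contra hne
  have ht : (word60 x y).1.trace - 2 ≠ 0 := sub_ne_zero.2 hne
  set t := (word60 x y).1.trace - 2 with htdef
  obtain ⟨p, hp, hp2, σ, hσ⟩ := padic_embed L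
    ({t⁻¹} ∪ (Finset.univ.image fun ij : Fin 2 × Fin 2 => x.1 ij.1 ij.2) ∪
      (Finset.univ.image fun ij : Fin 2 × Fin 2 => y.1 ij.1 ij.2))
  have hp' := hp.1
  have hmemx : ∀ i j, x.1 i j ∈ ({t⁻¹} ∪ (Finset.univ.image fun ij : Fin 2 × Fin 2 => x.1 ij.1 ij.2) ∪
      (Finset.univ.image fun ij : Fin 2 × Fin 2 => y.1 ij.1 ij.2)) := by
    intro i j
    rw [Finset.mem_union, Finset.mem_union]
    exact Or.inl (Or.inr (Finset.mem_image.2 ⟨(i, j), Finset.mem_univ _, rfl⟩))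
  have hmemy : ∀ i j, y.1 i j ∈ ({t⁻¹} ∪ (Finset.univ.image fun ij : Fin 2 × Fin 2 => x.1 ij.1 ij.2) ∪
      (Finset.univ.image fun ij : Fin 2 × Fin 2 => y.1 ij.1 ij.2)) := by
    intro i j
    rw [Finset.mem_union, Finset.mem_union]
    exact Or.inr (Finset.mem_image.2 ⟨(i, j), Finset.mem_univ _, rfl⟩)
  let ι : ℤ_[p] →+* ℚ_[p] := algebraMap ℤ_[p] ℚ_[p]
  have hι : Function.Injective ι := IsFractionRing.injective ℤ_[p] ℚ_[p]
  obtain ⟨xz, hxz⟩ := lift_SL ι hι (Matrix.SpecialLinearGroup.map σ x) (fun i j =>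
    ⟨⟨σ (x.1 i j), hσ _ (hmemx i j)⟩, rfl⟩)
  obtain ⟨yz, hyz⟩ := lift_SL ι hι (Matrix.SpecialLinearGroup.map σ y) (fun i j =>
    ⟨⟨σ (y.1 i j), hσ _ (hmemy i j)⟩, rfl⟩)
  let π : ℤ_[p] →+* ZMod p := PadicInt.toZMod
  have h2 : (2 : ZMod p) ≠ 0 := by
    intro h
    have h' : ((2 : ℕ) : ZMod p) = 0 := by exact_mod_cast h
    rw [ZMod.natCast_eq_zero_iff] at h'
    exact hp2 ((Nat.prime_dvd_prime_iff_eq hp' Nat.prime_two).1 h')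
  have key := finite_case p h2 ((Subgroup.closure {xz, yz}).map (Matrix.SpecialLinearGroup.map π)) (by
    rintro _ ⟨g, hg, rfl⟩
    have hmem : Matrix.SpecialLinearGroup.map ι g ∈
        (Subgroup.closure {xz, yz}).map (Matrix.SpecialLinearGroup.map ι) := ⟨g, hg, rfl⟩
    rw [map_closure_pair, hxz, hyz, ← map_closure_pair] at hmem
    obtain ⟨g', hg', hgg⟩ := hmem
    obtain ⟨l, hl⟩ := h g' hg'
    have htr : σ g'.1.trace = ι g.1.trace := by rw [← tr_map, ← tr_map, hgg]
    have hl' : (σ l) ^ 2 - ι g.1.trace * σ l + 1 = 0 := by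
      rw [← htr]
      have := congrArg σ hl
      simpa using this
    have hIntegral : IsIntegral ℤ_[p] (σ l) := by
      refine ⟨X ^ 2 - C g.1.trace * X + C 1, ?_, ?_⟩
      · monicity!
      · simp only [eval₂_add, eval₂_sub, eval₂_mul, eval₂_C, eval₂_X, eval₂_pow, eval₂_one, map_one]
        exact hl'
    obtain ⟨m, hm⟩ := IsIntegrallyClosed.isIntegral_iff.1 hIntegral
    refine ⟨π m, ?_⟩
    rw [tr_map]
    have h3 : m ^ 2 - g.1.trace * m + 1 = 0 := by
      apply hι
      change _ = σ l at hm
      simp only [map_add, map_sub, map_mul, map_pow, map_one, map_zero]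
      rw [show ι m = σ l from hm, hl']
    have := congrArg π h3
    simpa using this) (Matrix.SpecialLinearGroup.map π xz) (Matrix.SpecialLinearGroup.map π yz)
      ⟨xz, Subgroup.subset_closure (by simp), rfl⟩ ⟨yz, Subgroup.subset_closure (by simp), rfl⟩
  change (word60 (Matrix.SpecialLinearGroup.map π xz) (Matrix.SpecialLinearGroup.map π yz)).1.trace = 2 at key
  rw [← map_word60, tr_map] at key
  have hw : ι (word60 xz yz).1.trace = σ (word60 x y).1.trace := by
    rw [← tr_map, ← tr_map, map_word60, map_word60, hxz, hyz]
  have h1 : ι ((word60 xz yz).1.trace - 2) = σ t := by rw [map_sub, hw, htdef, map_sub, map_ofNat, map_ofNat]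
  have h3 : ‖σ t⁻¹‖ ≤ 1 := hσ _ (by simp)
  obtain ⟨r, hr⟩ : ∃ r : ℤ_[p], ι r = σ t⁻¹ := ⟨⟨σ t⁻¹, h3⟩, rfl⟩
  have h4 : ((word60 xz yz).1.trace - 2) * r = 1 := by
    apply hι
    rw [map_mul, h1, map_one, hr, ← map_mul, mul_inv_cancel₀ ht, map_one]
  have h5 := congrArg π h4
  rw [map_mul, map_sub, key, map_one, map_ofNat] at h5
  simp at h5

end

section
open Polynomial

lemma totient_bound (B n : ℕ) (hn : 0 < n) (h : n.totient ≤ B) : n ∣ ((B + 1).factorial) ^ (B + 1) := by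
  rw [Nat.dvd_iff_prime_pow_dvd_dvd]
  intro p k hp hk
  rcases Nat.eq_zero_or_pos k with rfl | hk0
  · simp
  have h1 : (p ^ k).totient ≤ B :=
    (Nat.le_of_dvd (Nat.totient_pos.2 hn) (Nat.totient_dvd_of_dvd hk)).trans h
  rw [Nat.totient_prime_pow hp hk0] at h1
  have hp2 := hp.two_le
  have h2 : p ^ (k - 1) ≤ B := le_trans (Nat.le_mul_of_pos_right _ (by omega)) h1
  have h3 : p - 1 ≤ B := le_trans (Nat.le_mul_of_pos_left _ (pow_pos hp.pos _)) h1
  have h4 : k - 1 < p ^ (k - 1) := Nat.lt_pow_self hp.one_lt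
  have h5 : p ∣ (B + 1).factorial := Nat.dvd_factorial hp.pos (by omega)
  exact (pow_dvd_pow_of_dvd h5 k).trans (pow_dvd_pow _ (by omega))

lemma pow_mem_or_torsion {E : Type*} [Field E] [Algebra ℚ E] (F : IntermediateField ℚ E) (t l : E) (ht : t ∈ F)
    (hl : l ^ 2 - t * l + 1 = 0) (q : ℕ) (hlq : l ^ q ∈ F) : l ∈ F ∨ l ^ (2 * q) = 1 := by
  have hli : l * (t - l) = 1 := by linear_combination -hl
  have key : ∀ n : ℕ, ∃ a ∈ F, ∃ b ∈ F, l ^ n = a * l + b ∧ (t - l) ^ n = a * (t - l) + b := by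
    intro n
    induction n with
    | zero => exact ⟨0, F.zero_mem, 1, F.one_mem, by simp, by simp⟩
    | succ n ih =>
      obtain ⟨a, ha, b, hb, h1, h2⟩ := ih
      refine ⟨a * t + b, F.add_mem (F.mul_mem ha ht) hb, -a, F.neg_mem ha, ?_, ?_⟩
      · rw [pow_succ, h1]; linear_combination a * hl
      · rw [pow_succ, h2]; linear_combination a * hl
  obtain ⟨a, ha, b, hb, h1, h2⟩ := key q
  by_cases ha0 : a = 0
  · right
    rw [ha0, zero_mul, zero_add] at h1 h2
    rw [two_mul, pow_add]
    nth_rewrite 2 [h1]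
    rw [← h2, ← mul_pow, hli, one_pow]
  · left
    have : l = (l ^ q - b) * a⁻¹ := by
      rw [h1]; field_simp; ring
    rw [this]
    exact F.mul_mem (F.sub_mem hlq hb) (F.inv_mem ha)

lemma natDegree_minpoly_tower (K F E : Type*) [Field K] [Field F] [Field E] [Algebra K F] [Algebra F E]
    [Algebra K E] [IsScalarTower K F E] [FiniteDimensional K F] (l : E) (hIntegral : IsIntegral F l) :
    (minpoly K l).natDegree ≤ Module.finrank K F * (minpoly F l).natDegree := by
  have e1 : Module.finrank F (IntermediateField.adjoin F {l}) = (minpoly F l).natDegree :=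
    IntermediateField.adjoin.finrank hIntegral
  have : FiniteDimensional F (IntermediateField.adjoin F {l}) :=
    IntermediateField.adjoin.finiteDimensional hIntegral
  have e2 : Module.finrank K F * Module.finrank F (IntermediateField.adjoin F {l}) =
    Module.finrank K (IntermediateField.adjoin F {l}) := Module.finrank_mul_finrank _ _ _
  have : FiniteDimensional K (IntermediateField.adjoin F {l}) := FiniteDimensional.trans K F _
  let l' : IntermediateField.adjoin F {l} := ⟨l, IntermediateField.mem_adjoin_simple_self F l⟩
  have : IsScalarTower K (IntermediateField.adjoin F {l}) E := IsScalarTower.of_algebraMap_eq fun r => by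
    rw [IsScalarTower.algebraMap_apply K F E, IsScalarTower.algebraMap_apply K F (IntermediateField.adjoin F {l})]; rfl
  have e3 : minpoly K l = minpoly K l' :=
    minpoly.algebraMap_eq (A := K) (B := IntermediateField.adjoin F {l}) (B' := E)
      (algebraMap (IntermediateField.adjoin F {l}) E).injective l'
  rw [e3]
  refine (minpoly.natDegree_le l').trans ?_
  rw [← e2, e1]

theorem alg_case (E : Type*) [Field E] [Algebra ℚ E] [Algebra.IsAlgebraic ℚ E]
    (x y : Matrix.SpecialLinearGroup (Fin 2) E) (T : Finset E)
    (h : ∀ g ∈ Subgroup.closure {x, y}, ∃ l : E, l ^ 2 - g.1.trace * l + 1 = 0 ∧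
      ∃ τ ∈ T, ∃ q : ℕ, 0 < q ∧ ∃ m : ℤ, l ^ q = τ ^ m) :
    (word60 x y).1.trace = 2 := by
  classical
  have hchar : CharZero E := algebraRat.charZero E
  let s : Set E := (Set.range fun ij : Fin 2 × Fin 2 => x.1 ij.1 ij.2) ∪
    (Set.range fun ij : Fin 2 × Fin 2 => y.1 ij.1 ij.2) ∪ (T : Set E)
  have hsfin : s.Finite := ((Set.finite_range _).union (Set.finite_range _)).union T.finite_toSet
  let F : IntermediateField ℚ E := IntermediateField.adjoin ℚ s
  have hsub : ∀ z ∈ s, z ∈ F := fun z hz => IntermediateField.subset_adjoin ℚ s hz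
  have : Finite s := hsfin
  have hFfin : FiniteDimensional ℚ F :=
    IntermediateField.finiteDimensional_adjoin fun z _ => Algebra.IsIntegral.isIntegral z
  let B := Module.finrank ℚ F * 2
  let M := ((B + 1).factorial) ^ (B + 1)
  have hM : 0 < M := pow_pos (Nat.factorial_pos _) _
  let W : Set E := {z | z ^ M = 1}
  have hW : W.Finite := by
    refine ((nthRootsFinset M (1:E)).finite_toSet).subset fun z hz => ?_
    rw [Finset.mem_coe, mem_nthRootsFinset hM]
    exact hz
  have : Finite W := hW
  let L : IntermediateField ℚ E := IntermediateField.adjoin ℚ (s ∪ W)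
  have hFL : F ≤ L := IntermediateField.adjoin.mono ℚ _ _ Set.subset_union_left
  have hLfin : FiniteDimensional ℚ L :=
    IntermediateField.finiteDimensional_adjoin fun z _ => Algebra.IsIntegral.isIntegral z
  have hnf : NumberField L := by
    refine { to_charZero := inferInstance, to_finiteDimensional := ?_ }
    have e : (DivisionRing.toRatAlgebra : Algebra ℚ L) = L.algebra' := Subsingleton.elim _ _
    rw [e]
    exact hLfin
  have hx : ∀ i j, x.1 i j ∈ F := fun i j => hsub _ (Or.inl (Or.inl ⟨(i, j), rfl⟩))
  have hy : ∀ i j, y.1 i j ∈ F := fun i j => hsub _ (Or.inl (Or.inr ⟨(i, j), rfl⟩))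
  let ι : L →+* E := algebraMap L E
  let κ : F →+* E := algebraMap F E
  have hι : Function.Injective ι := ι.injective
  have hκ : Function.Injective κ := κ.injective
  obtain ⟨xF, hxF⟩ := lift_SL κ hκ x (fun i j => ⟨⟨_, hx i j⟩, rfl⟩)
  obtain ⟨yF, hyF⟩ := lift_SL κ hκ y (fun i j => ⟨⟨_, hy i j⟩, rfl⟩)
  obtain ⟨xL, hxL⟩ := lift_SL ι hι x (fun i j => ⟨⟨_, hFL (hx i j)⟩, rfl⟩)
  obtain ⟨yL, hyL⟩ := lift_SL ι hι y (fun i j => ⟨⟨_, hFL (hy i j)⟩, rfl⟩)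
  have htrF : ∀ g ∈ Subgroup.closure {x, y}, g.1.trace ∈ F := by
    intro g hg
    rw [← hxF, ← hyF, ← map_closure_pair] at hg
    obtain ⟨g', -, rfl⟩ := hg
    rw [tr_map]
    exact (g'.1.trace).2
  have hmain : ∀ g ∈ Subgroup.closure {x, y}, ∃ l ∈ L, l ^ 2 - g.1.trace * l + 1 = 0 := by
    intro g hg
    obtain ⟨l, hl, τ, hτ, q, hq, m, hlq⟩ := h g hg
    refine ⟨l, ?_, hl⟩
    have hlF : l ^ q ∈ F := by rw [hlq]; exact zpow_mem (hsub τ (Or.inr hτ)) m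
    rcases pow_mem_or_torsion F _ l (htrF g hg) hl q hlF with h | h
    · exact hFL h
    · apply IntermediateField.subset_adjoin ℚ (s ∪ W)
      right
      have hfo : IsOfFinOrder l := isOfFinOrder_iff_pow_eq_one.2 ⟨2 * q, by omega, h⟩
      have hpr : IsPrimitiveRoot l (orderOf l) := IsPrimitiveRoot.orderOf l
      have hdeg : (minpoly ℚ l).natDegree = (orderOf l).totient := by
        have e := congrArg natDegree (cyclotomic_eq_minpoly_rat hpr hfo.orderOf_pos)
        rw [natDegree_cyclotomic] at e
        rw [e]
        congr 2
        exact Subsingleton.elim _ _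
      have hFl : (minpoly F l).natDegree ≤ 2 := by
        let P : F[X] := X ^ 2 - C ⟨g.1.trace, htrF g hg⟩ * X + C 1
        have hPm : P.Monic := by simp only [P]; monicity!
        have hPd : P.natDegree = 2 := by simp only [P]; compute_degree!
        rw [← hPd]
        refine natDegree_le_natDegree (minpoly.min F l hPm ?_)
        simp only [P, map_add, map_sub, map_mul, map_pow, aeval_X, aeval_C, map_one]
        exact hl
      have hle : (orderOf l).totient ≤ B := by
        rw [← hdeg]
        have hIntegral : IsIntegral F l := Algebra.IsIntegral.isIntegral l
        exact (@natDegree_minpoly_tower ℚ F E _ _ _ F.algebra' _ _ _ hFfin l hIntegral).trans (Nat.mul_le_mul_left _ hFl)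
      obtain ⟨k, hk⟩ := totient_bound B _ hfo.orderOf_pos hle
      change l ^ M = 1
      simp only [M]
      rw [hk, pow_mul, pow_orderOf_eq_one, one_pow]
  have key := nf_case L xL yL (by
    intro g hg
    have hmem : Matrix.SpecialLinearGroup.map ι g ∈ (Subgroup.closure {xL, yL}).map (Matrix.SpecialLinearGroup.map ι) :=
      ⟨g, hg, rfl⟩
    rw [map_closure_pair, hxL, hyL] at hmem
    obtain ⟨l, hlL, hl⟩ := hmain _ hmem
    refine ⟨⟨l, hlL⟩, hι ?_⟩
    rw [tr_map] at hl
    simp only [map_add, map_sub, map_mul, map_pow, map_one, map_zero]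
    exact hl)
  rw [← hxL, ← hyL, ← map_word60, tr_map, key, map_ofNat]

end

section
open Polynomial

lemma quot_spec (K R S : Type) [Field K] [CommRing R] [CommRing S] [Algebra K R] [Algebra.FiniteType K R]
    [Algebra R S] [Algebra.IsIntegral R S] [Nontrivial S] :
    ∃ (E : Type) (_ : Field E) (_ : Algebra K E) (_ : Algebra.IsAlgebraic K E), Nonempty (S →+* E) := by
  obtain ⟨M, hM⟩ := Ideal.exists_maximal S
  let P : Ideal R := M.comap (algebraMap R S)
  have hP : P.IsMaximal := Ideal.isMaximal_comap_of_isIntegral_of_isMaximal M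
  let f : R ⧸ P →+* S ⧸ M := Ideal.quotientMap M (algebraMap R S) le_rfl
  have hf : f.IsIntegral := (algebraMap_isIntegral_iff.2 inferInstance).quotient
  have hfin : Module.Finite K (R ⧸ P) := by
    let _ : Field (R ⧸ P) := Ideal.Quotient.field P
    exact finite_of_finite_type_of_isJacobsonRing K (R ⧸ P)
  have h2 : (algebraMap K (R ⧸ P)).IsIntegral := algebraMap_isIntegral_iff.2 inferInstance
  let iF : Field (S ⧸ M) := Ideal.Quotient.field M
  let iA : Algebra K (S ⧸ M) := (f.comp (algebraMap K (R ⧸ P))).toAlgebra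
  have h3 : @Algebra.IsIntegral K (S ⧸ M) _ _ iA := algebraMap_isIntegral_iff.1 (h2.trans _ _ hf)
  have h4 : @Algebra.IsAlgebraic K (S ⧸ M) _ _ iA := inferInstance
  exact ⟨S ⧸ M, iF, iA, h4, ⟨Ideal.Quotient.mk M⟩⟩

lemma exists_spec (s : Set ℂ) (hs : s.Finite) : ∃ S : Subring ℂ, s ⊆ S ∧
    (∀ t ∈ S, ∀ l : ℂ, l ^ 2 - t * l + 1 = 0 → l ∈ S) ∧
    ∃ (E : Type) (_ : Field E) (_ : Algebra ℚ E) (_ : Algebra.IsAlgebraic ℚ E), Nonempty (S →+* E) := by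
  let R : Subalgebra ℚ ℂ := Algebra.adjoin ℚ s
  have hR : Algebra.FiniteType ℚ R := by
    rw [← Subalgebra.fg_iff_finiteType]
    exact ⟨hs.toFinset, by simp [R]⟩
  let S : Subalgebra R ℂ := integralClosure R ℂ
  refine ⟨S.toSubring, ?_, ?_, ?_⟩
  · intro z hz
    change z ∈ integralClosure R ℂ
    have := (integralClosure R ℂ).algebraMap_mem (⟨z, Algebra.subset_adjoin hz⟩ : R)
    exact this
  · intro t ht l hl
    change l ∈ integralClosure R ℂ
    let t' : S := ⟨t, ht⟩
    have h1 : IsIntegral S l := by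
      refine ⟨X ^ 2 - C t' * X + C 1, ?_, ?_⟩
      · monicity!
      · simp only [eval₂_add, eval₂_sub, eval₂_mul, eval₂_C, eval₂_X, eval₂_pow, eval₂_one, map_one]
        exact hl
    have : Algebra.IsIntegral R S := integralClosure.AlgebraIsIntegral ..
    exact isIntegral_trans (R := R) (A := S) l h1
  · have hIntegral : Algebra.IsIntegral R S := integralClosure.AlgebraIsIntegral ..
    exact quot_spec ℚ R S

theorem cplx_case (x y : Matrix.SpecialLinearGroup (Fin 2) ℂ) (T : Finset ℂ) (hT : ∀ τ ∈ T, τ ≠ 0)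
    (h : ∀ g ∈ Subgroup.closure {x, y}, ∀ l : ℂ, l ^ 2 - g.1.trace * l + 1 = 0 →
      ∃ τ ∈ T, ∃ q : ℕ, 0 < q ∧ ∃ m : ℤ, l ^ q = τ ^ m) :
    (word60 x y).1.trace = 2 := by
  classical
  by_contra hne
  have ht : (word60 x y).1.trace - 2 ≠ 0 := sub_ne_zero.2 hne
  obtain ⟨S, hsS, hroot, E, _, _, _, ⟨φ⟩⟩ := exists_spec
    ((Set.range fun ij : Fin 2 × Fin 2 => x.1 ij.1 ij.2) ∪
    (Set.range fun ij : Fin 2 × Fin 2 => y.1 ij.1 ij.2) ∪ (T : Set ℂ) ∪ ((T.image fun z => z⁻¹ : Finset ℂ) : Set ℂ)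
      ∪ {((word60 x y).1.trace - 2)⁻¹})
    (((((Set.finite_range _).union (Set.finite_range _)).union T.finite_toSet).union
      (Finset.finite_toSet _)).union (Set.finite_singleton _))
  have hx : ∀ i j, x.1 i j ∈ S := fun i j => hsS (Or.inl (Or.inl (Or.inl (Or.inl ⟨(i, j), rfl⟩))))
  have hy : ∀ i j, y.1 i j ∈ S := fun i j => hsS (Or.inl (Or.inl (Or.inl (Or.inr ⟨(i, j), rfl⟩))))
  have hτ : ∀ τ ∈ T, τ ∈ S := fun τ h => hsS (Or.inl (Or.inl (Or.inr h)))
  have hτi : ∀ τ ∈ T, τ⁻¹ ∈ S := fun τ h =>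
    hsS (Or.inl (Or.inr (Finset.mem_coe.2 (Finset.mem_image.2 ⟨τ, h, rfl⟩))))
  have hti : ((word60 x y).1.trace - 2)⁻¹ ∈ S := hsS (Or.inr rfl)
  let ι : S →+* ℂ := S.subtype
  have hι : Function.Injective ι := Subtype.val_injective
  obtain ⟨xS, hxS⟩ := lift_SL ι hι x (fun i j => ⟨⟨_, hx i j⟩, rfl⟩)
  obtain ⟨yS, hyS⟩ := lift_SL ι hι y (fun i j => ⟨⟨_, hy i j⟩, rfl⟩)
  have key := alg_case E (Matrix.SpecialLinearGroup.map φ xS) (Matrix.SpecialLinearGroup.map φ yS)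
    (T.attach.image fun τ => φ ⟨τ.1, hτ τ.1 τ.2⟩) (by
    intro g hg
    rw [← map_closure_pair] at hg
    obtain ⟨g, hg, rfl⟩ := hg
    have hmem : Matrix.SpecialLinearGroup.map ι g ∈ (Subgroup.closure {xS, yS}).map (Matrix.SpecialLinearGroup.map ι) :=
      ⟨g, hg, rfl⟩
    rw [map_closure_pair, hxS, hyS] at hmem
    obtain ⟨l, hl⟩ : ∃ l : ℂ, l ^ 2 - (ι g.1.trace) * l + 1 = 0 := by
      obtain ⟨r, hr⟩ := IsAlgClosed.exists_pow_nat_eq ((ι g.1.trace) ^ 2 - 4) (n := 2) (by norm_num)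
      exact ⟨((ι g.1.trace) + r) / 2, by linear_combination hr / 4⟩
    obtain ⟨τ, hτT, q, hq, m, hlq⟩ := h _ hmem l (by rw [tr_map]; exact hl)
    have hlS : l ∈ S := hroot _ (g.1.trace).2 l hl
    rw [tr_map]
    let u : Sˣ := ⟨⟨τ, hτ τ hτT⟩, ⟨τ⁻¹, hτi τ hτT⟩,
      hι (mul_inv_cancel₀ (hT τ hτT)), hι (inv_mul_cancel₀ (hT τ hτT))⟩
    have hl1 : (⟨l, hlS⟩ : S) ^ 2 - g.1.trace * ⟨l, hlS⟩ + 1 = 0 := hι hl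
    have hl2 : (⟨l, hlS⟩ : S) ^ q = ((u ^ m : Sˣ) : S) := by
      apply hι
      have : ι ((u ^ m : Sˣ) : S) = τ ^ m := by
        have h1 : ((Units.map (ι : S →* ℂ) (u ^ m) : ℂˣ) : ℂ) = τ ^ m := by
          rw [map_zpow, Units.val_zpow_eq_zpow_val]; rfl
        exact h1
      rw [this, ← hlq]; rfl
    refine ⟨φ ⟨l, hlS⟩, ?_, φ ⟨τ, hτ τ hτT⟩, ?_, q, hq, m, ?_⟩
    · have := congrArg φ hl1
      simpa only [map_add, map_sub, map_mul, map_pow, map_one, map_zero] using this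
    · exact Finset.mem_image.2 ⟨⟨τ, hτT⟩, Finset.mem_attach _ _, rfl⟩
    · rw [← map_pow, hl2]
      have h1 : ((Units.map (φ : S →* E) (u ^ m) : Eˣ) : E) = (φ ⟨τ, hτ τ hτT⟩) ^ m := by
        rw [map_zpow, Units.val_zpow_eq_zpow_val]; rfl
      exact h1)
  rw [← map_word60, tr_map] at key
  have hw : ι (word60 xS yS).1.trace = (word60 x y).1.trace := by
    rw [← tr_map, map_word60, hxS, hyS]
  have h4 : ((word60 xS yS).1.trace - 2) * ⟨_, hti⟩ = 1 := by
    apply hι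
    rw [map_mul, map_sub, hw, map_one, map_ofNat]
    exact mul_inv_cancel₀ ht
  have h5 := congrArg φ h4
  rw [map_mul, map_sub, key, map_one, map_ofNat] at h5
  simp at h5

end

section
open MvPolynomial
lemma density (Γ : Subgroup (Matrix.SpecialLinearGroup (Fin 2) ℂ))
    (hΓ : ∀ p : MvPolynomial (Fin 2 × Fin 2) ℂ,
    (∀ g ∈ (Γ : Set (Matrix.SpecialLinearGroup (Fin 2) ℂ)), MvPolynomial.eval (fun ij => (g : Matrix (Fin 2) (Fin 2) ℂ) ij.1 ij.2) p = 0) →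
    ∀ g : Matrix.SpecialLinearGroup (Fin 2) ℂ,
      MvPolynomial.eval (fun ij => (g : Matrix (Fin 2) (Fin 2) ℂ) ij.1 ij.2) p = 0) :
    ∃ x ∈ Γ, ∃ y ∈ Γ, (word60 x y).1.trace ≠ 2 := by
  by_contra! hcon
  let A : Matrix (Fin 2) (Fin 2) (MvPolynomial (Fin 2 × Fin 2) ℂ) := Matrix.of fun i j => X (i, j)
  have hA : ∀ g : Matrix.SpecialLinearGroup (Fin 2) ℂ,
      (eval (fun ij => g.1 ij.1 ij.2)).mapMatrix A = g.1 := by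
    intro g; ext i j; simp [A]
  have hC : ∀ (g : Matrix.SpecialLinearGroup (Fin 2) ℂ) (B : Matrix (Fin 2) (Fin 2) ℂ),
      (eval (fun ij => g.1 ij.1 ij.2)).mapMatrix ((C : ℂ →+* MvPolynomial (Fin 2 × Fin 2) ℂ).mapMatrix B) = B := by
    intro g B; ext i j; simp
  have htr : ∀ (g : Matrix.SpecialLinearGroup (Fin 2) ℂ) (B : Matrix (Fin 2) (Fin 2) (MvPolynomial (Fin 2 × Fin 2) ℂ)),
      eval (fun ij => g.1 ij.1 ij.2) B.trace = ((eval (fun ij => g.1 ij.1 ij.2)).mapMatrix B).trace := by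
    intro g B; simp [Matrix.trace_fin_two]
  have hword : ∀ x y : Matrix.SpecialLinearGroup (Fin 2) ℂ, (word60 x y).1.trace =
      (x.1 ^ 60 * y.1 ^ 60 * (x.1 ^ 60).adjugate * (y.1 ^ 60).adjugate).trace := by
    intro x y
    have := tr_comm_formula (x ^ 60) (y ^ 60)
    exact this
  have h1 : ∀ y ∈ Γ, ∀ x, (word60 x y).1.trace = 2 := by
    intro y hy x
    let Y := (C : ℂ →+* MvPolynomial (Fin 2 × Fin 2) ℂ).mapMatrix y.1
    have key : ∀ g : Matrix.SpecialLinearGroup (Fin 2) ℂ, eval (fun ij => g.1 ij.1 ij.2)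
        ((A ^ 60 * Y ^ 60 * (A ^ 60).adjugate * (Y ^ 60).adjugate).trace - C 2) = (word60 g y).1.trace - 2 := by
      intro g
      rw [map_sub, eval_C, htr, hword]
      simp only [map_mul, map_pow, RingHom.map_adjugate, hA, Y, hC]
    have := hΓ _ (fun g hg => by rw [key g, hcon g hg y hy, sub_self]) x
    rw [key] at this
    exact sub_eq_zero.1 this
  have h2 : ∀ x y : Matrix.SpecialLinearGroup (Fin 2) ℂ, (word60 x y).1.trace = 2 := by
    intro x y
    let Y := (C : ℂ →+* MvPolynomial (Fin 2 × Fin 2) ℂ).mapMatrix x.1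
    have key : ∀ g : Matrix.SpecialLinearGroup (Fin 2) ℂ, eval (fun ij => g.1 ij.1 ij.2)
        ((Y ^ 60 * A ^ 60 * (Y ^ 60).adjugate * (A ^ 60).adjugate).trace - C 2) = (word60 x g).1.trace - 2 := by
      intro g
      rw [map_sub, eval_C, htr, hword]
      simp only [map_mul, map_pow, RingHom.map_adjugate, hA, Y, hC]
    have := hΓ _ (fun g hg => by rw [key g, h1 g hg x, sub_self]) y
    rw [key] at this
    exact sub_eq_zero.1 this
  have hu : ∀ n : ℕ, (!![1, 1; 0, 1] : Matrix (Fin 2) (Fin 2) ℂ) ^ n = !![1, (n : ℂ); 0, 1] := by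
    intro n
    induction n with
    | zero => ext i j; fin_cases i <;> fin_cases j <;> simp
    | succ n ih => rw [pow_succ, ih]; ext i j; fin_cases i <;> fin_cases j <;> simp [Matrix.mul_apply, Fin.sum_univ_two, add_comm]
  have hv : ∀ n : ℕ, (!![1, 0; 1, 1] : Matrix (Fin 2) (Fin 2) ℂ) ^ n = !![1, 0; (n : ℂ), 1] := by
    intro n
    induction n with
    | zero => ext i j; fin_cases i <;> fin_cases j <;> simp
    | succ n ih => rw [pow_succ, ih]; ext i j; fin_cases i <;> fin_cases j <;> simp [Matrix.mul_apply, Fin.sum_univ_two, add_comm]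
  let U : Matrix.SpecialLinearGroup (Fin 2) ℂ := ⟨!![1, 1; 0, 1], by simp [Matrix.det_fin_two]⟩
  let V : Matrix.SpecialLinearGroup (Fin 2) ℂ := ⟨!![1, 0; 1, 1], by simp [Matrix.det_fin_two]⟩
  have h3 := (hword U V).symm.trans (h2 U V)
  simp only [U, V] at h3
  simp only [hu, hv, Matrix.trace_fin_two, Matrix.adjugate_fin_two, Matrix.mul_apply, Fin.sum_univ_two] at h3
  norm_num at h3

end

lemma isEigenvalue_iff (g : Matrix.SpecialLinearGroup (Fin 2) ℂ) (l : ℂ) :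
    IsEigenvalue g l ↔ l ^ 2 - g.1.trace * l + 1 = 0 := by
  have hd := g.2
  rw [Matrix.det_fin_two] at hd
  unfold IsEigenvalue
  rw [Matrix.det_fin_two, Matrix.trace_fin_two]
  simp only [Matrix.sub_apply, Matrix.smul_apply, Matrix.one_apply, smul_eq_mul]
  norm_num
  constructor
  · intro h; linear_combination h - hd
  · intro h; linear_combination h + hd

lemma exists_new (Γ : Subgroup (Matrix.SpecialLinearGroup (Fin 2) ℂ))
    (hΓ : ZariskiDenseSet (Γ : Set (Matrix.SpecialLinearGroup (Fin 2) ℂ)))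
    (s : Finset ℂ) (hs : ∀ z ∈ s, z ≠ 0 ∧ ∀ q : ℤ, z ^ q = 1 → q = 0) :
    ∃ l : ℂ, ((l ≠ 0 ∧ ∀ q : ℤ, l ^ q = 1 → q = 0) ∧ ∃ g ∈ Γ, IsEigenvalue g l) ∧
      ∀ z ∈ s, MultIndep z l := by
  classical
  by_contra! hcon
  obtain ⟨x, hx, y, hy, hxy⟩ := density Γ hΓ
  apply hxy
  have hcl : Subgroup.closure {x, y} ≤ Γ := by
    rw [Subgroup.closure_le]
    rintro z (rfl | rfl)
    exacts [hx, hy]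
  refine cplx_case x y (insert 1 s) ?_ ?_
  · intro τ hτ
    rcases Finset.mem_insert.1 hτ with rfl | h
    · exact one_ne_zero
    · exact (hs τ h).1
  · intro g hg l hl
    have hl0 : l ≠ 0 := by
      rintro rfl
      norm_num at hl
    -- it is enough to have a nonzero integer exponent
    have red : ∀ τ ∈ insert 1 s, ∀ q m : ℤ, q ≠ 0 → l ^ q = τ ^ m →
        ∃ τ ∈ insert 1 s, ∃ q : ℕ, 0 < q ∧ ∃ m : ℤ, l ^ q = τ ^ m := by
      intro τ hτ q m hq h
      refine ⟨τ, hτ, q.natAbs, Int.natAbs_pos.2 hq, ?_⟩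
      rcases Int.natAbs_eq q with e | e
      · exact ⟨m, by rw [← h, ← zpow_natCast, ← e]⟩
      · refine ⟨-m, ?_⟩
        have e' : (q.natAbs : ℤ) = -q := by omega
        rw [← zpow_natCast, e', zpow_neg, zpow_neg, h]
    by_cases hnt : ∀ q : ℤ, l ^ q = 1 → q = 0
    · obtain ⟨z, hz, hzl⟩ := hcon l ⟨⟨hl0, hnt⟩, g, hcl hg, (isEigenvalue_iff g l).2 hl⟩
      unfold MultIndep at hzl
      push Not at hzl
      obtain ⟨p, q, h, hpq⟩ := hzl
      refine red z (Finset.mem_insert_of_mem hz) p q ?_ h.symm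
      rintro rfl
      exact hpq rfl ((hs z hz).2 q (by simpa using h))
    · push Not at hnt
      obtain ⟨q, h, hq⟩ := hnt
      exact red 1 (Finset.mem_insert_self _ _) q 0 hq (by simpa using h)


/-- If `Γ ≤ SL₂(ℂ)` is Zariski-dense, then there are infinitely many pairwise
multiplicatively independent complex numbers occurring as eigenvalues of elements of `Γ`. -/
theorem zariski_dense_subgroup_exists_infinite_multIndep_eigenvalues
    (Γ : Subgroup (Matrix.SpecialLinearGroup (Fin 2) ℂ))
    (hΓ : ZariskiDenseSet (Γ : Set (Matrix.SpecialLinearGroup (Fin 2) ℂ))) :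
    ∃ Λ : Set ℂ, Λ.Infinite ∧ Λ.Pairwise MultIndep ∧
      ∀ lam ∈ Λ, ∃ g ∈ Γ, IsEigenvalue g lam := by
  have hsymm : Std.Symm (MultIndep : ℂ → ℂ → Prop) := ⟨fun a b h p q e => (h q p e.symm).symm⟩
  obtain ⟨f, hf, hr⟩ := exists_seq_of_forall_finset_exists'
    (fun l : ℂ => (l ≠ 0 ∧ ∀ q : ℤ, l ^ q = 1 → q = 0) ∧ ∃ g ∈ Γ, IsEigenvalue g l)
    MultIndep
    (fun s hs => exists_new Γ hΓ s fun z hz => (hs z hz).1)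
  have hinj : Function.Injective f := by
    intro a b hab
    by_contra hne
    have h := hr hne 1 1 (by rw [hab])
    exact one_ne_zero h.1
  refine ⟨Set.range f, Set.infinite_range_of_injective hinj, ?_, ?_⟩
  · rintro _ ⟨a, rfl⟩ _ ⟨b, rfl⟩ hne
    exact hr fun h => hne (by rw [h])
  · rintro _ ⟨a, rfl⟩
    exact (hf a).2
end

section
/- Let K be a finitely generated field extension of ℚ and x ∈ K. Then at least one of the following holds: (i) x = 0; (ii) both x and x⁻¹ are algebraic integers (i.e. x is an invertible algebraic integer); (iii) there exists a discrete valuation v : K* → ℤ (a surjective group homomorphism satisfying v(a+b) ≥ min(v(a), v(b)) whenever a, b, a+b ∈ K*) with v(x) ≠ 0. -/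
/-- Existence of a discrete valuation that is nonzero at `x`. -/
def HasDiscVal (K : Type*) [Field K] (x : K) : Prop :=
  ∃ (hx : x ≠ 0) (v : Kˣ → ℤ),
      Function.Surjective v ∧
      (∀ a b : Kˣ, v (a * b) = v a + v b) ∧
      (∀ a b c : Kˣ, (a : K) + (b : K) = (c : K) → min (v a) (v b) ≤ v c) ∧
      v (Units.mk0 x hx) ≠ 0

theorem HasDiscVal.of_inv {K : Type*} [Field K] {x : K} (h : HasDiscVal K x⁻¹) :
    HasDiscVal K x := by
  obtain ⟨hx, v, hs, hm, ha, hv⟩ := h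
  have hx0 : x ≠ 0 := fun h => hx (by simp [h])
  refine ⟨hx0, v, hs, hm, ha, fun h0 => hv ?_⟩
  have h1 := hm 1 1
  have h2 := hm (Units.mk0 x hx0) (Units.mk0 x⁻¹ hx)
  have h3 : Units.mk0 x hx0 * Units.mk0 x⁻¹ hx = 1 := by
    ext; simp [hx0]
  rw [h3] at h2
  simp at h1
  omega

theorem hasDiscVal_of_dedekind {A K : Type*} [CommRing A] [IsDedekindDomain A] [Field K]
    [Algebra A K] [IsFractionRing A K] (x : K) (hx : x ∉ Set.range (algebraMap A K)) :
    HasDiscVal K x := by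
  have hx0 : x ≠ 0 := by
    rintro rfl
    exact hx ⟨0, map_zero _⟩
  have : ∃ P : IsDedekindDomain.HeightOneSpectrum A, ¬ P.valuation K x ≤ 1 := by
    by_contra! h
    exact hx (IsDedekindDomain.HeightOneSpectrum.mem_integers_of_valuation_le_one K x h)
  obtain ⟨P, hP⟩ := this
  have hne : ∀ a : Kˣ, P.valuation K (a : K) ≠ 0 := fun a => by simp
  refine ⟨hx0, fun a => -(WithZero.log (P.valuation K (a : K))), ?_, ?_, ?_, ?_⟩
  · obtain ⟨π, hπ⟩ := P.valuation_exists_uniformizer K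
    have hπ0 : π ≠ 0 := by
      rintro rfl
      rw [map_zero] at hπ
      exact WithZero.exp_ne_zero hπ.symm
    intro n
    refine ⟨(Units.mk0 π hπ0) ^ n, ?_⟩
    simp [hπ]
  · intro a b
    simp only [Units.val_mul, map_mul]
    rw [WithZero.log_mul (hne a) (hne b)]
    ring
  · intro a b c h
    have := (P.valuation K).map_add (a : K) (b : K)
    rw [h] at this
    rcases le_max_iff.1 this with h | h
    · exact min_le_of_left_le (neg_le_neg ((WithZero.log_le_log (hne c) (hne a)).2 h))
    · exact min_le_of_right_le (neg_le_neg ((WithZero.log_le_log (hne c) (hne b)).2 h))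
  · intro h
    apply hP
    have h' : WithZero.log (P.valuation K x) = 0 := by simpa using h
    have := WithZero.exp_log (x := P.valuation K x) (by simpa using hx0)
    rw [← this, h']
    simp

theorem hasDiscVal_of_finite {D F K : Type*} [CommRing D] [IsDedekindDomain D] [Field F]
    [Algebra D F] [IsFractionRing D F] [Field K] [CharZero F] [Algebra F K] [Algebra D K]
    [IsScalarTower D F K] [FiniteDimensional F K] (x : K) (hx : ¬ IsIntegral D x) :
    HasDiscVal K x := by
  have := IsIntegralClosure.isDedekindDomain D F K (integralClosure D K)
  have := IsIntegralClosure.isFractionRing_of_finite_extension D F K (integralClosure D K)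
  refine hasDiscVal_of_dedekind (A := integralClosure D K) x ?_
  rintro ⟨y, rfl⟩
  exact hx y.2

theorem hasDiscVal_of_ufd {R F K : Type*} [CommRing R] [IsDomain R] [IsNoetherianRing R]
    [UniqueFactorizationMonoid R] [Field F]
    [Algebra R F] [IsFractionRing R F] [Field K] [CharZero F] [Algebra F K] [Algebra R K]
    [IsScalarTower R F K] [FiniteDimensional F K] (x : K) (hx : ¬ IsIntegral R x) :
    HasDiscVal K x := by
  -- some coefficient of the minimal polynomial is not in `R`
  have h1 : ∃ n, (minpoly F x).coeff n ∉ Set.range (algebraMap R F) := by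
    by_contra! h
    apply hx
    have hl : minpoly F x ∈ Polynomial.lifts (algebraMap R F) :=
      (Polynomial.lifts_iff_coeff_lifts _).2 h
    obtain ⟨q, hq, -, hqm⟩ := Polynomial.lifts_and_degree_eq_and_monic hl
      (minpoly.monic (Algebra.IsIntegral.isIntegral x))
    refine ⟨q, hqm, ?_⟩
    rw [IsScalarTower.algebraMap_eq R F K, ← Polynomial.eval₂_map, hq]
    exact minpoly.aeval F x
  obtain ⟨n, hn⟩ := h1
  set c := (minpoly F x).coeff n with hc
  have hden : ¬ IsUnit (IsFractionRing.den R c : R) := by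
    intro hu
    exact hn (IsFractionRing.isInteger_of_isUnit_den hu)
  obtain ⟨p, hpi, hpd⟩ := WfDvdMonoid.exists_irreducible_factor hden
    (nonZeroDivisors.coe_ne_zero _)
  have hp : Prime p := hpi.prime
  have hpn : ¬ p ∣ IsFractionRing.num R c := fun h =>
    hpi.not_isUnit (IsFractionRing.num_den_reduced R c h hpd)
  have : (Ideal.span {p}).IsPrime := (Ideal.span_singleton_prime hp.ne_zero).2 hp
  set S := (Ideal.span {p}).primeCompl with hS
  have hS0 : S ≤ nonZeroDivisors R := Ideal.primeCompl_le_nonZeroDivisors _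
  let D := Localization.subalgebra.ofField F S hS0
  have : IsLocalization.AtPrime D (Ideal.span {p}) :=
    Localization.subalgebra.isLocalization_ofField F S hS0
  have : IsLocalRing D := IsLocalization.AtPrime.isLocalRing D (Ideal.span {p})
  have : IsNoetherianRing D := IsLocalization.isNoetherianRing S D inferInstance
  have hmax : (IsLocalRing.maximalIdeal D).IsPrincipal := by
    rw [← IsLocalization.AtPrime.map_eq_maximalIdeal (Ideal.span {p}) D, Ideal.map_span,
      Set.image_singleton]
    exact ⟨⟨_, rfl⟩⟩
  have : IsDedekindDomain D :=
    ((tfae_of_isNoetherianRing_of_isLocalRing_of_isDomain D).out 2 4).2 hmax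
  refine hasDiscVal_of_finite (D := D) (F := F) x ?_
  intro hi
  have h2 := minpoly.isIntegrallyClosed_eq_field_fractions' F hi
  have h3 : c = algebraMap D F ((minpoly D x).coeff n) := by
    rw [hc, h2, Polynomial.coeff_map]
  have h4 : c ∈ D := by
    rw [h3]
    exact ((minpoly D x).coeff n).2
  obtain ⟨a, s, hs, has⟩ := h4
  have hps : ¬ p ∣ s := fun h => hs (Ideal.mem_span_singleton.2 h)
  have hs0 : algebraMap R F s ≠ 0 := by
    rw [Ne, IsFractionRing.to_map_eq_zero_iff]
    rintro rfl
    exact hps (dvd_zero _)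
  have hd0 : algebraMap R F (IsFractionRing.den R c) ≠ 0 := by
    rw [Ne, IsFractionRing.to_map_eq_zero_iff]
    exact nonZeroDivisors.coe_ne_zero _
  have h5 : algebraMap R F (IsFractionRing.num R c) / algebraMap R F (IsFractionRing.den R c) = c := by
    rw [← IsFractionRing.mk'_eq_div, IsFractionRing.mk'_num_den]
  have h5 := h5.trans (has.trans (div_eq_mul_inv _ _).symm)
  rw [div_eq_div_iff hd0 hs0, ← map_mul, ← map_mul] at h5
  have h6 := IsFractionRing.injective R F h5
  have : p ∣ IsFractionRing.num R c * s := h6 ▸ hpd.mul_left a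
  rcases hp.dvd_or_dvd this with h | h
  · exact hpn h
  · exact hps h

theorem hasDiscVal_of_alg {R K : Type*} [CommRing R] [IsDomain R] [IsNoetherianRing R]
    [UniqueFactorizationMonoid R] [Field K] [CharZero K] [Algebra R K]
    [FaithfulSMul R K] [Algebra.IsAlgebraic R K]
    (hfg : ∃ s : Finset K, IntermediateField.adjoin ℚ (s : Set K) = ⊤)
    (x : K) (hx : ¬ IsIntegral R x) :
    HasDiscVal K x := by
  let _ := FractionRing.liftAlgebra R K
  have := FractionRing.isScalarTower_liftAlgebra R K
  have : CharZero (FractionRing R) :=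
    (algebraMap (FractionRing R) K).charZero_iff (algebraMap (FractionRing R) K).injective |>.2
      inferInstance
  have : Algebra.IsAlgebraic (FractionRing R) K :=
    IsFractionRing.comap_isAlgebraic_iff (A := R) (K := FractionRing R) (C := K) |>.1 inferInstance
  have : FiniteDimensional (FractionRing R) K := by
    obtain ⟨s, hs⟩ := hfg
    have h1 : IntermediateField.adjoin (FractionRing R) (s : Set K) = ⊤ := by
      rw [eq_top_iff]
      intro y _
      have hy : y ∈ IntermediateField.adjoin ℚ (s : Set K) := hs ▸ IntermediateField.mem_top
      induction hy using IntermediateField.adjoin_induction with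
      | mem y hy => exact IntermediateField.subset_adjoin _ _ hy
      | algebraMap q => simp
      | add a b _ _ ha hb => exact add_mem (ha trivial) (hb trivial)
      | mul a b _ _ ha hb => exact mul_mem (ha trivial) (hb trivial)
      | inv a _ ha => exact inv_mem (ha trivial)
    have h2 : FiniteDimensional (FractionRing R)
        (IntermediateField.adjoin (FractionRing R) (s : Set K)) :=
      IntermediateField.finiteDimensional_adjoin fun x _ => Algebra.IsIntegral.isIntegral x
    rw [h1] at h2
    exact Module.Finite.equiv (IntermediateField.topEquiv (F := FractionRing R) (E := K)).toLinearEquiv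
  exact hasDiscVal_of_ufd (R := R) (F := FractionRing R) x hx

theorem hasDiscVal_of_not_integral {K : Type*} [Field K] [CharZero K]
    (hfg : ∃ s : Finset K, IntermediateField.adjoin ℚ (s : Set K) = ⊤)
    (x : K) (hx : ¬ IsIntegral ℤ x) :
    HasDiscVal K x := by
  have key : ∃ u : Set K, u.Finite ∧ IsTranscendenceBasis ℤ ((↑) : u → K) ∧
      (IsAlgebraic ℤ x ∨ x⁻¹ ∈ u) := by
    obtain ⟨s, hs⟩ := hfg
    have halg : ∀ t : Set K, (s : Set K) ⊆ t → Algebra.IsAlgebraic (Algebra.adjoin ℤ t) K := by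
      intro t ht
      refine ⟨fun y => ?_⟩
      have hy : y ∈ IntermediateField.adjoin ℚ (s : Set K) := hs ▸ IntermediateField.mem_top
      induction hy using IntermediateField.adjoin_induction with
      | mem y hy =>
        exact isAlgebraic_algebraMap (⟨y, Algebra.subset_adjoin (ht hy)⟩ : Algebra.adjoin ℤ t)
      | algebraMap q =>
        have h1 : IsAlgebraic ℤ (algebraMap ℚ K q) :=
          (IsFractionRing.isAlgebraic_iff ℤ ℚ K).2 (isAlgebraic_algebraMap q)
        exact h1.extendScalars (FaithfulSMul.algebraMap_injective ℤ _)
      | add a b _ _ ha hb => exact ha.add hb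
      | mul a b _ _ ha hb => exact ha.mul hb
      | inv a _ ha => exact ha.inv
    by_cases hxa : IsAlgebraic ℤ x
    · have := halg s subset_rfl
      obtain ⟨u, -, hu, hb⟩ := exists_isTranscendenceBasis_between (R := ℤ) (∅ : Set K) s
        (Set.empty_subset _)
        ((algebraicIndependent_empty_iff ..).mpr <| FaithfulSMul.algebraMap_injective ℤ K)
      exact ⟨u, s.finite_toSet.subset hu, hb, Or.inl hxa⟩
    · have := halg (insert x⁻¹ s) (Set.subset_insert _ _)
      have hxt : Transcendental ℤ x⁻¹ := fun h => hxa (by simpa using h.inv)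
      obtain ⟨u, hu', hu, hb⟩ := exists_isTranscendenceBasis_between (R := ℤ) ({x⁻¹} : Set K)
        (insert x⁻¹ s) (by simp)
        (by
          have := (algebraicIndependent_unique_type_iff (R := ℤ) (x := fun i : ({x⁻¹} : Set K) => (i : K))).2 hxt
          exact this)
      exact ⟨u, (s.finite_toSet.insert _).subset hu, hb, Or.inr (hu' rfl)⟩
  obtain ⟨u, hfin, hb, hcase⟩ := key
  have : Finite u := hfin
  have hai := hb.1
  let e : MvPolynomial u ℤ ≃ₐ[ℤ] Algebra.adjoin ℤ (Set.range ((↑) : u → K)) := hai.aevalEquiv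
  let R := Algebra.adjoin ℤ (Set.range ((↑) : u → K))
  have : IsNoetherianRing R := isNoetherianRing_of_ringEquiv _ e.toRingEquiv
  have : UniqueFactorizationMonoid R := e.toMulEquiv.uniqueFactorizationMonoid inferInstance
  have : Algebra.IsAlgebraic R K := hb.isAlgebraic
  refine hasDiscVal_of_alg (R := R) hfg x ?_
  intro hi
  rcases hcase with hxa | hxu
  · apply hx
    let k := Algebra.adjoin ℤ {x}
    have : Algebra.IsAlgebraic ℤ k := by
      have := Algebra.isAlgebraic_adjoin_singleton_iff.2 hxa
      exact (Subalgebra.isAlgebraic_iff _).1 this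
    have hk : AlgebraicIndependent k ((↑) : u → K) := hai.extendScalars k
    let xk : k := ⟨x, Algebra.self_mem_adjoin_singleton ℤ x⟩
    obtain ⟨P, hPm, hP⟩ := hi
    let Q : Polynomial (MvPolynomial u ℤ) := P.map (e.symm : R →+* MvPolynomial u ℤ)
    have hQm : Q.Monic := hPm.map _
    let Ψ : MvPolynomial u k →+* K := (MvPolynomial.aeval (R := k) ((↑) : u → K)).toRingHom
    have hΨ : Function.Injective Ψ := algebraicIndependent_iff_injective_aeval.1 hk
    let m : MvPolynomial u ℤ →+* MvPolynomial u k := MvPolynomial.map (algebraMap ℤ k)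
    have hcomp : (Ψ.comp m).comp (e.symm : R →+* MvPolynomial u ℤ) = algebraMap R K := by
      have h1 : Ψ.comp m = (algebraMap R K).comp (e : MvPolynomial u ℤ →+* R) := by
        apply MvPolynomial.ringHom_ext
        · intro r
          simp
        · intro i
          have : algebraMap R K (e (MvPolynomial.X i)) = (i : K) := by
            rw [hai.algebraMap_aevalEquiv]
            simp
          simp [Ψ, m, this]
      rw [h1]
      ext r
      simp
    have h0 : Polynomial.eval₂ m (MvPolynomial.C xk) Q = 0 := by
      apply hΨ
      rw [Polynomial.hom_eval₂, map_zero, Polynomial.eval₂_map, hcomp]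
      have : Ψ (MvPolynomial.C xk) = x := by
        simp [Ψ]
        rfl
      rw [this]
      exact hP
    have h2 : IsIntegral ℤ xk := by
      refine ⟨Q.map MvPolynomial.constantCoeff, hQm.map _, ?_⟩
      have h3 := congrArg (MvPolynomial.constantCoeff (R := k) (σ := u)) h0
      rw [Polynomial.hom_eval₂, map_zero, MvPolynomial.constantCoeff_C] at h3
      rw [Polynomial.eval₂_map, ← h3]
      congr 1
    exact h2.map k.val
  · have h1 : ∃ r : R, algebraMap R K r = x := by
      let _ := FractionRing.liftAlgebra R K
      have := FractionRing.isScalarTower_liftAlgebra R K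
      let y : R := ⟨x⁻¹, Algebra.subset_adjoin ⟨⟨_, hxu⟩, rfl⟩⟩
      have hy : algebraMap (FractionRing R) K (algebraMap R (FractionRing R) y)⁻¹ = x := by
        rw [map_inv₀, ← IsScalarTower.algebraMap_apply]
        exact inv_inv x
      rw [← hy, isIntegral_algebraMap_iff (algebraMap (FractionRing R) K).injective,
        IsIntegrallyClosed.isIntegral_iff] at hi
      obtain ⟨r, hr⟩ := hi
      refine ⟨r, ?_⟩
      rw [IsScalarTower.algebraMap_apply R (FractionRing R) K, hr, hy]
    obtain ⟨r, hr⟩ := h1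
    have hx0 : x ≠ 0 := by
      rintro rfl
      exact hx isIntegral_zero
    have h2 : hai.repr r * MvPolynomial.X ⟨x⁻¹, hxu⟩ = 1 := by
      apply algebraicIndependent_iff_injective_aeval.1 hai
      rw [map_mul, hai.aeval_repr, MvPolynomial.aeval_X, map_one]
      change algebraMap R K r * x⁻¹ = 1
      rw [hr, mul_inv_cancel₀ hx0]
    have h3 := congrArg (MvPolynomial.constantCoeff (R := ℤ) (σ := u)) h2
    simp at h3

theorem fin_gen_field_zero_or_unit_or_valuation
    (K : Type*) [Field K] [CharZero K]
    (hfg : ∃ s : Finset K, IntermediateField.adjoin ℚ (s : Set K) = ⊤)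
    (x : K) :
    x = 0 ∨
    (IsIntegral ℤ x ∧ IsIntegral ℤ x⁻¹) ∨
    (∃ (hx : x ≠ 0) (v : Kˣ → ℤ),
      Function.Surjective v ∧
      (∀ a b : Kˣ, v (a * b) = v a + v b) ∧
      (∀ a b c : Kˣ, (a : K) + (b : K) = (c : K) → min (v a) (v b) ≤ v c) ∧
      v (Units.mk0 x hx) ≠ 0) := by
  right
  by_cases h1 : IsIntegral ℤ x
  · by_cases h2 : IsIntegral ℤ x⁻¹
    · exact Or.inl ⟨h1, h2⟩
    · exact Or.inr (hasDiscVal_of_not_integral hfg _ h2).of_inv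
  · exact Or.inr (hasDiscVal_of_not_integral hfg _ h1)
end

section
/- Let K be a finitely generated field extension of ℚ and let x ∈ K* be an element that is not a root of unity. Then ρ_K(x) < ∞, i.e. the set {n ∈ ℕ : ∃ α ∈ K, αⁿx⁻¹ ∈ W_K} is bounded. -/
/-- `y` is a root of unity in the field `K`. -/
def IsRootOfUnity {K : Type*} [Field K] (y : K) : Prop :=
  ∃ m : ℕ, 0 < m ∧ y ^ m = 1

/-- The set whose supremum is `ρ_K(x)`: natural numbers `n ≥ 1` such that some
`α ∈ K` satisfies `αⁿ·x⁻¹ ∈ W_K`. -/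
def rhoSet (K : Type*) [Field K] (x : K) : Set ℕ :=
  {n : ℕ | 0 < n ∧ ∃ α : K, IsRootOfUnity (α ^ n * x⁻¹)}

/-- In a finitely generated extension of `ℚ`, the algebraic closure of `ℚ` is a number field. -/
theorem finite_algebraicClosure_aux (K : Type*) [Field K] [CharZero K]
    [Algebra.EssFiniteType ℚ K] : FiniteDimensional ℚ (algebraicClosure ℚ K) := by
  obtain ⟨t, ht⟩ := exists_isTranscendenceBasis ℚ K
  have halg := ht.isAlgebraic_field
  have hess : Algebra.EssFiniteType
      (IntermediateField.adjoin ℚ (Set.range ((↑) : t → K))) K :=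
    Algebra.EssFiniteType.of_comp ℚ _ K
  have hfin : Module.Finite (IntermediateField.adjoin ℚ (Set.range ((↑) : t → K))) K :=
    Algebra.finite_of_essFiniteType_of_isAlgebraic
  have hk : AlgebraicIndependent (algebraicClosure ℚ K) ((↑) : t → K) := ht.1.algebraicClosure
  let A := Algebra.adjoin ℚ (Set.range ((↑) : t → K))
  let b : Module.Basis (t →₀ ℕ) ℚ A :=
    (MvPolynomial.basisMonomials t ℚ).map ht.1.aevalEquiv.toLinearEquiv
  have hb : LinearIndependent (algebraicClosure ℚ K).toSubalgebra (A.val ∘ b) := by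
    have h1 := (MvPolynomial.basisMonomials t (algebraicClosure ℚ K)).linearIndependent.map'
      (MvPolynomial.aeval (R := algebraicClosure ℚ K) ((↑) : t → K)).toLinearMap
      (LinearMap.ker_eq_bot.2 hk)
    have h2 : A.val ∘ b = (MvPolynomial.aeval (R := algebraicClosure ℚ K)
        ((↑) : t → K)).toLinearMap ∘
          (MvPolynomial.basisMonomials t (algebraicClosure ℚ K)) := by
      funext m
      simp [b, A, MvPolynomial.aeval_monomial]
    rw [h2]
    exact h1
  have hd : (algebraicClosure ℚ K).toSubalgebra.LinearDisjoint A :=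
    Subalgebra.LinearDisjoint.of_basis_right _ _ b hb
  let c := Module.Basis.ofVectorSpace ℚ (algebraicClosure ℚ K)
  have hc : LinearIndependent A ((algebraicClosure ℚ K).toSubalgebra.val ∘ c) :=
    hd.linearIndependent_left_of_flat c.linearIndependent
  open scoped IntermediateField.algebraAdjoinAdjoin in
  have hc' : LinearIndependent (IntermediateField.adjoin ℚ (Set.range ((↑) : t → K)))
      ((algebraicClosure ℚ K).toSubalgebra.val ∘ c) :=
    (LinearIndependent.iff_fractionRing A _).1 hc
  have := hc'.finite
  exact Module.Finite.of_basis c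

theorem rho_number_field_aux (k : Type*) [Field k] [NumberField k] (x : k) (hx : x ≠ 0)
    (hxu : ¬ IsRootOfUnity x) : BddAbove (rhoSet k x) := by
  classical
  have hu : ∀ z : k, IsRootOfUnity z → Height.logHeight₁ z = 0 := by
    rintro z ⟨m, hm, hz⟩
    have := Height.logHeight₁_pow z m
    rw [hz, Height.logHeight₁_one] at this
    have hm' : (m : ℝ) ≠ 0 := by positivity
    simpa [hm'] using this.symm
  have hu' : ∀ z : k, z ≠ 0 → Height.logHeight₁ z = 0 → IsRootOfUnity z := by
    intro z hz h
    have hf := NumberField.finite_setOfPred_logHeight₁_le (K := k) 0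
    have : ¬ Function.Injective (fun n : ℕ => z ^ n) := by
      intro hi
      refine Set.infinite_range_of_injective hi (hf.subset ?_)
      rintro _ ⟨n, rfl⟩
      simp [Height.logHeight₁_pow, h]
    simp only [Function.Injective, not_forall] at this
    obtain ⟨a, b, hab, hne⟩ := this
    wlog hlt : a < b generalizing a b
    · exact this b a hab.symm (Ne.symm hne) (by omega)
    refine ⟨b - a, by omega, ?_⟩
    have h2 : z ^ a * z ^ (b - a) = z ^ a * 1 := by
      rw [← pow_add, mul_one, Nat.add_sub_cancel' hlt.le]; exact hab.symm
    exact mul_left_cancel₀ (pow_ne_zero _ hz) h2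
  -- every `n` in the set gives an element with `n * h(α) = h(x)`
  have key : ∀ n ∈ rhoSet k x, ∃ α : k, α ≠ 0 ∧ ¬ IsRootOfUnity α ∧
      (n : ℝ) * Height.logHeight₁ α = Height.logHeight₁ x := by
    rintro n ⟨hn, α, m, hm, h⟩
    have h1 : (α ^ n) ^ m = x ^ m := by
      rw [mul_pow, inv_pow] at h
      exact (mul_inv_eq_one₀ (pow_ne_zero _ hx)).1 h
    have hα : α ≠ 0 := by
      rintro rfl
      rw [zero_pow hn.ne', zero_pow hm.ne'] at h1
      exact pow_ne_zero _ hx h1.symm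
    have h2 := congrArg Height.logHeight₁ h1
    rw [Height.logHeight₁_pow, Height.logHeight₁_pow, Height.logHeight₁_pow] at h2
    have hm' : (m : ℝ) ≠ 0 := by positivity
    have h3 := mul_left_cancel₀ hm' h2
    refine ⟨α, hα, fun hr => hxu (hu' x hx ?_), h3⟩
    rw [← h3, hu α hr, mul_zero]
  by_cases hne : (rhoSet k x).Nonempty
  · obtain ⟨n₀, hn₀⟩ := hne
    obtain ⟨α₀, h0, h1, h2⟩ := key n₀ hn₀
    obtain ⟨β, ⟨hβ0, hβ⟩, hmin⟩ := Northcott.exists_min_image (Height.logHeight₁ (K := k))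
      {α : k | α ≠ 0 ∧ ¬ IsRootOfUnity α} ⟨α₀, h0, h1⟩
    have hpos : 0 < Height.logHeight₁ β :=
      lt_of_le_of_ne (Height.zero_le_logHeight₁ β) fun h => hβ (hu' β hβ0 h.symm)
    refine ⟨⌈Height.logHeight₁ x / Height.logHeight₁ β⌉₊, fun n hn => ?_⟩
    obtain ⟨α, ha0, ha1, ha2⟩ := key n hn
    have : (n : ℝ) ≤ Height.logHeight₁ x / Height.logHeight₁ β := by
      rw [le_div_iff₀ hpos, ← ha2]
      exact mul_le_mul_of_nonneg_left (hmin α ⟨ha0, ha1⟩) (Nat.cast_nonneg n)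
    exact_mod_cast this.trans (Nat.le_ceil _)
  · rw [Set.not_nonempty_iff_eq_empty.1 hne]
    exact bddAbove_empty

theorem intDegree_pow_aux {E : Type*} [Field E] (z : RatFunc E) (hz : z ≠ 0) (n : ℕ) :
    (z ^ n).intDegree = n * z.intDegree := by
  induction n with
  | zero => simp
  | succ n ih =>
    rw [pow_succ, RatFunc.intDegree_mul (pow_ne_zero _ hz) hz, ih]; push_cast; ring

theorem rho_transcendental_aux (K : Type*) [Field K] [CharZero K]
    [Algebra.EssFiniteType ℚ K] (x : K) (hx : x ≠ 0) (hxt : Transcendental ℚ x) :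
    BddAbove (rhoSet K x) := by
  have hs : AlgebraicIndepOn ℚ id ({x} : Set K) :=
    (algebraicIndependent_singleton_iff (R := ℚ) (x := fun i : ({x} : Set K) => (i : K))
      ⟨x, rfl⟩).2 hxt
  obtain ⟨t, hxt', ht⟩ := exists_isTranscendenceBasis_superset hs
  have hmem : x ∈ t := hxt' rfl
  let E := IntermediateField.adjoin ℚ (t \ {x})
  have htr : Transcendental E x := by
    rw [IntermediateField.transcendental_adjoin_iff]
    have h := ht.1.transcendental_adjoin (s := {i | (i : K) ≠ x}) (i := ⟨x, hmem⟩) (by simp)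
    have hset : ((↑) : t → K) '' {i | (i : K) ≠ x} = t \ {x} := by
      ext y
      simp [and_comm]
    rw [hset] at h
    exact h
  have halg : Algebra.IsAlgebraic (IntermediateField.adjoin E {x}) K := by
    have h := ht.isAlgebraic_field
    have h2 : (IntermediateField.adjoin E {x}).restrictScalars ℚ =
        IntermediateField.adjoin ℚ (Set.range ((↑) : t → K)) := by
      refine (IntermediateField.adjoin_adjoin_left ℚ (t \ {x}) {x}).trans ?_
      rw [Subtype.range_coe]
      congr 1
      simpa using hmem
    rw [← h2] at h
    exact h
  have hess1 : Algebra.EssFiniteType E K := Algebra.EssFiniteType.of_comp ℚ _ K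
  have hess : Algebra.EssFiniteType (IntermediateField.adjoin E {x}) K :=
    Algebra.EssFiniteType.of_comp E _ K
  have hfin : Module.Finite (IntermediateField.adjoin E {x}) K :=
    Algebra.finite_of_essFiniteType_of_isAlgebraic
  let e := (RatFunc.algEquivOfTranscendental x htr).symm
  set d := Module.finrank (IntermediateField.adjoin E {x}) K with hd
  have hdpos : 0 < d := Module.finrank_pos
  refine ⟨d, ?_⟩
  rintro n ⟨hn, α, m, hm, h⟩
  have h1 : (α ^ n) ^ m = x ^ m := by
    rw [mul_pow, inv_pow] at h
    exact (mul_inv_eq_one₀ (pow_ne_zero _ hx)).1 h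
  have hα : α ≠ 0 := by
    rintro rfl
    rw [zero_pow hn.ne', zero_pow hm.ne'] at h1
    exact pow_ne_zero _ hx h1.symm
  have hNx : Algebra.norm (IntermediateField.adjoin E {x}) x =
      (IntermediateField.AdjoinSimple.gen E x) ^ d :=
    Algebra.norm_algebraMap (S := K) (IntermediateField.AdjoinSimple.gen E x)
  have h2 := congrArg (fun z => e (Algebra.norm (IntermediateField.adjoin E {x}) z)) h1
  simp only [map_pow, hNx] at h2
  have hgen : e (IntermediateField.AdjoinSimple.gen E x) = RatFunc.X :=
    RatFunc.algEquivOfTranscendental_symm_gen x htr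
  rw [hgen] at h2
  have h3 := congrArg RatFunc.intDegree h2
  have hN : e (Algebra.norm (IntermediateField.adjoin E {x}) α) ≠ 0 := by
    rw [Ne, map_eq_zero]
    exact (Algebra.norm_ne_zero_iff).2 hα
  rw [intDegree_pow_aux _ (pow_ne_zero _ hN), intDegree_pow_aux _ hN,
    intDegree_pow_aux _ (pow_ne_zero _ RatFunc.X_ne_zero),
    intDegree_pow_aux _ RatFunc.X_ne_zero, RatFunc.intDegree_X, mul_one] at h3
  have h4 := mul_left_cancel₀ (by exact_mod_cast hm.ne' : (m : ℤ) ≠ 0) h3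
  exact Nat.le_of_dvd hdpos (Int.natCast_dvd_natCast.1 ⟨_, h4.symm⟩)

/-- If `K` is a finitely generated field extension of `ℚ` and `x ∈ K*` is not a root
of unity, then `ρ_K(x) < ∞`. -/
theorem rho_finite_of_not_rootOfUnity
    (K : Type*) [Field K] [CharZero K]
    (hfg : ∃ s : Finset K, IntermediateField.adjoin ℚ (s : Set K) = ⊤)
    (x : K) (hx : x ≠ 0) (hxu : ¬ IsRootOfUnity x) :
    BddAbove (rhoSet K x) := by
  have hess : Algebra.EssFiniteType ℚ K := IntermediateField.fg_top_iff.1 hfg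
  by_cases hxt : Transcendental ℚ x
  · exact rho_transcendental_aux K x hx hxt
  have hxa : IsAlgebraic ℚ x := not_not.1 hxt
  have hfin := finite_algebraicClosure_aux K
  have hnf : NumberField (algebraicClosure ℚ K) := {}
  let x' : algebraicClosure ℚ K := ⟨x, mem_algebraicClosure_iff.2 hxa⟩
  have hx' : x' ≠ 0 := fun h => hx (congrArg Subtype.val h)
  have hxu' : ¬ IsRootOfUnity x' := by
    rintro ⟨m, hm, h⟩
    exact hxu ⟨m, hm, congrArg Subtype.val h⟩
  refine (rho_number_field_aux _ x' hx' hxu').mono ?_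
  rintro n ⟨hn, α, m, hm, h⟩
  have h1 : (α ^ n) ^ m = x ^ m := by
    rw [mul_pow, inv_pow] at h
    exact (mul_inv_eq_one₀ (pow_ne_zero _ hx)).1 h
  have hαa : IsAlgebraic ℚ α := by
    refine IsAlgebraic.of_pow (n := n * m) (Nat.mul_pos hn hm) ?_
    rw [pow_mul, h1]
    exact hxa.pow m
  refine ⟨hn, ⟨α, mem_algebraicClosure_iff.2 hαa⟩, m, hm, Subtype.ext ?_⟩
  exact h
end

section
/- Let K be a field and x ∈ K* with ρ_K(x) < ∞. Define Θ_{K,x} = {p/q ∈ ℚ : p ∈ ℤ, q ∈ ℤ \ {0}, ∃ β ∈ K*, β^q·x^{-p} ∈ W_K}. Then Θ_{K,x} is a subgroup of (ℚ,+) and equals (1/ρ_K(x))·ℤ, the cyclic group generated by 1/ρ_K(x). -/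
/-- The set `Θ_{K,x}` of rationals `p/q` such that `β^q·x^{-p} ∈ W_K` for some `β ∈ K*`. -/
def ThetaSet (K : Type*) [Field K] (x : K) : Set ℚ :=
  {r : ℚ | ∃ p q : ℤ, q ≠ 0 ∧ r = (p : ℚ) / (q : ℚ) ∧
    ∃ β : K, β ≠ 0 ∧ IsRootOfUnity (β ^ q * x ^ (-p))}

theorem rou_iff {K : Type*} [Field K] (u : Kˣ) :
    IsRootOfUnity (u : K) ↔ (QuotientGroup.mk u : Kˣ ⧸ CommGroup.torsion Kˣ) = 1 := by
  rw [QuotientGroup.eq_one_iff]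
  change _ ↔ IsOfFinOrder u
  rw [isOfFinOrder_iff_pow_eq_one]
  unfold IsRootOfUnity
  simp only [Units.ext_iff, Units.val_pow_eq_pow_val, Units.val_one]

/-- Group-theoretic core. -/
theorem core {G : Type*} [CommGroup G] [IsMulTorsionFree G] (a b X : G) (N p q : ℤ) (hq : q ≠ 0)
    (ha : a ^ N = X) (hb : b ^ q = X ^ p) :
    ∃ g q' p' : ℤ, g ≠ 0 ∧ q = g * q' ∧ N * p = g * p' ∧ ∃ c : G, c ^ (N * q') = X := by
  have hg : (Int.gcd q (N * p) : ℤ) ≠ 0 := by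
    simp [Int.gcd_eq_zero_iff, hq]
  obtain ⟨q', hq'⟩ := Int.gcd_dvd_left q (N * p)
  obtain ⟨p', hp'⟩ := Int.gcd_dvd_right q (N * p)
  have hbez := Int.gcd_eq_gcd_ab q (N * p)
  set g : ℤ := (Int.gcd q (N * p) : ℤ) with hgdef
  set u := Int.gcdA q (N * p)
  set v := Int.gcdB q (N * p)
  refine ⟨g, q', p', hg, hq', hp', a ^ u * b ^ v, ?_⟩
  have h1 : q' * u + p' * v = 1 := by
    apply mul_left_cancel₀ hg
    calc g * (q' * u + p' * v) = (g * q') * u + (g * p') * v := by ring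
      _ = g * 1 := by rw [← hq', ← hp', mul_one]; exact hbez.symm
  have h2 : b ^ q' = a ^ p' := by
    apply zpow_left_injective hg
    change (b ^ q') ^ g = (a ^ p') ^ g
    rw [← zpow_mul, ← zpow_mul, mul_comm q', mul_comm p', ← hq', ← hp', hb, ← ha, zpow_mul]
  have h3 : (a ^ u * b ^ v) ^ q' = a := by
    rw [mul_zpow, ← zpow_mul, ← zpow_mul, mul_comm v, zpow_mul b, h2, ← zpow_mul, ← zpow_add,
      mul_comm u, h1, zpow_one]
  rw [mul_comm N, zpow_mul, h3, ha]

theorem thetaSet_eq_closure_inv_rho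
    (K : Type*) [Field K] (x : K) (hx : x ≠ 0)
    (hfin : BddAbove (rhoSet K x)) :
    ThetaSet K x =
      (AddSubgroup.closure {(1 : ℚ) / ((sSup (rhoSet K x) : ℕ) : ℚ)} : Set ℚ) := by
  have hne : (rhoSet K x).Nonempty := ⟨1, one_pos, x, 1, one_pos, by simp [hx]⟩
  have hmem := Nat.sSup_mem hne hfin
  have hle : ∀ n ∈ rhoSet K x, n ≤ sSup (rhoSet K x) := fun n hn => le_csSup hfin hn
  set N := sSup (rhoSet K x)
  obtain ⟨hN, α, hα⟩ := hmem
  have hα0 : α ≠ 0 := by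
    rintro rfl
    obtain ⟨m, hm, h⟩ := hα
    simp [hN.ne', hm.ne'] at h
  have hNQ : (N : ℚ) ≠ 0 := by exact_mod_cast hN.ne'
  ext r
  rw [SetLike.mem_coe, AddSubgroup.mem_closure_singleton]
  constructor
  · rintro ⟨p, q, hq, rfl, β, hβ, hroot⟩
    lift x to Kˣ using hx.isUnit
    lift α to Kˣ using hα0.isUnit
    lift β to Kˣ using hβ.isUnit
    have hα' := (rou_iff (α ^ N * x⁻¹)).1 (by simpa using hα)
    have hβ' := (rou_iff (β ^ q * x ^ (-p))).1 (by simpa using hroot)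
    rw [zpow_neg] at hβ'
    rw [QuotientGroup.mk_mul, QuotientGroup.mk_inv, mul_inv_eq_one] at hα' hβ'
    obtain ⟨g, q', p', hg, hqq, hpp, c, hc⟩ := core
      (α : Kˣ ⧸ CommGroup.torsion Kˣ) β x N p q hq (by simpa using hα') (by simpa using hβ')
    have hq'0 : q' ≠ 0 := by rintro rfl; simp at hqq; exact hq hqq
    have hmem : N * q'.natAbs ∈ rhoSet K (x : K) := by
      refine ⟨by positivity, ?_⟩
      have : ∃ d : Kˣ ⧸ CommGroup.torsion Kˣ, d ^ (N * q'.natAbs) = x := by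
        rcases Int.natAbs_eq q' with h | h
        · refine ⟨c, ?_⟩
          rw [h] at hc
          exact_mod_cast hc
        · refine ⟨c⁻¹, ?_⟩
          rw [h, mul_neg, zpow_neg, ← inv_zpow] at hc
          exact_mod_cast hc
      obtain ⟨d, hd⟩ := this
      obtain ⟨d, rfl⟩ := QuotientGroup.mk_surjective d
      refine ⟨d, ?_⟩
      have := (rou_iff (d ^ (N * q'.natAbs) * x⁻¹)).2 (by
        rw [QuotientGroup.mk_mul, QuotientGroup.mk_inv, mul_inv_eq_one, QuotientGroup.mk_pow, hd])
      simpa using this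
    have h1 : q'.natAbs ≤ 1 := by
      have := hle _ hmem
      exact Nat.le_of_mul_le_mul_left (by simpa using this) hN
    have h2 : q' * q' = 1 := by
      have : q' = 1 ∨ q' = -1 := by omega
      rcases this with rfl | rfl <;> rfl
    refine ⟨p' * q', ?_⟩
    have hqQ : (q : ℚ) ≠ 0 := by exact_mod_cast hq
    have h3 : (p' * q') * q = p * N := by
      rw [mul_comm p, hpp, hqq]
      linear_combination (p' * g) * h2
    have h3' : ((p' * q' : ℤ) : ℚ) * q = p * N := by exact_mod_cast h3
    rw [zsmul_eq_mul, mul_one_div, div_eq_div_iff hNQ hqQ, h3']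
  · rintro ⟨k, rfl⟩
    refine ⟨k, N, by exact_mod_cast hN.ne', by simp [div_eq_mul_inv], α ^ k, zpow_ne_zero _ hα0, ?_⟩
    obtain ⟨m, hm, h⟩ := hα
    refine ⟨m, hm, ?_⟩
    have : (α ^ k) ^ (N : ℤ) * x ^ (-k) = (α ^ N * x⁻¹) ^ k := by
      rw [mul_zpow, inv_zpow, zpow_neg, ← zpow_natCast α N, ← zpow_mul, ← zpow_mul, mul_comm k]
    rw [this, ← zpow_natCast, ← zpow_mul, mul_comm k, zpow_mul, zpow_natCast, h, one_zpow]
end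

section
/- Let K be a finitely generated field extension of ℚ with algebraic closure K̄, let S be a finite subset of K*, and let Λ ⊆ K̄* be a subset such that: (1) deg K(λ)/K ≤ 2 for every λ ∈ Λ, and (2) for every λ ∈ Λ there exist μ ∈ S and integers p, q ∈ ℤ \ {0} with λ^p = μ^q. Then there exist a finite subgroup W of K̄* and a finite subset S' of K̄*, none of whose elements is a root of unity, such that every λ ∈ Λ can be written as λ = α^N·w with α ∈ S', N ∈ ℤ and w ∈ W. -/
section Aux
open Polynomial

theorem deg_eq_of_spec {A F L : Type*} [CommRing A] [IsDomain A] [IsIntegrallyClosed A]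
    [Algebra ℚ A] (ε : A →ₐ[ℚ] ℚ) [Field F] [Algebra A F] [IsFractionRing A F] [Field L]
    [Algebra F L] [Algebra A L] [IsScalarTower A F L] [Algebra ℚ L] [IsScalarTower ℚ A L]
    (a : L) (ha : IsIntegral ℚ a) :
    (minpoly F a).natDegree = (minpoly ℚ a).natDegree := by
  have haA : IsIntegral A a := ha.tower_top
  have h1 := minpoly.isIntegrallyClosed_eq_field_fractions F L haA
  have hm := minpoly.monic haA
  simp only [Algebra.algebraMap_self, RingHom.id_apply] at h1
  rw [h1, hm.natDegree_map]
  have hinj : Function.Injective (algebraMap A L) := by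
    rw [IsScalarTower.algebraMap_eq A F L]
    exact (algebraMap F L).injective.comp (IsFractionRing.injective A F)
  have : Module.IsTorsionFree A L := by
    have : FaithfulSMul A L := (faithfulSMul_iff_algebraMap_injective A L).2 hinj
    infer_instance
  have hd : minpoly A a ∣ (minpoly ℚ a).map (algebraMap ℚ A) := by
    apply minpoly.isIntegrallyClosed_dvd haA
    rw [aeval_map_algebraMap, minpoly.aeval]
  have hd2 := Polynomial.map_dvd (ε : A →+* ℚ) hd
  rw [Polynomial.map_map, show ((ε : A →+* ℚ).comp (algebraMap ℚ A)) = RingHom.id ℚ from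
    RingHom.ext fun x => by simp, Polynomial.map_id] at hd2
  have hirr := minpoly.irreducible ha
  have hm2 : ((minpoly A a).map (ε : A →+* ℚ)).Monic := hm.map _
  rcases hirr.dvd_iff.1 hd2 with h | h
  · exfalso
    have := hm2.eq_one_of_isUnit h
    have h3 := hm.natDegree_map (ε : A →+* ℚ)
    rw [this, natDegree_one] at h3
    exact (minpoly.natDegree_pos haA).ne h3
  · rw [← hm.natDegree_map (ε : A →+* ℚ)]
    exact (Polynomial.natDegree_eq_of_degree_eq (degree_eq_degree_of_associated h)).symm

theorem pow_le_of_prime {A F K : Type*} [CommRing A] [IsDomain A] [UniqueFactorizationMonoid A]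
    [Field F] [Algebra A F] [IsFractionRing A F] [Field K]
    [Algebra F K] [Algebra A K] [IsScalarTower A F K] [FiniteDimensional F K]
    (π : A) (hπ : Prime π) (p : ℕ) (hp : 0 < p) (y : K) (hy : y ^ p = algebraMap A K π) :
    p ≤ Module.finrank F K := by
  have hmon : (X ^ p - C π : A[X]).Monic := monic_X_pow_sub_C π hp.ne'
  have hirr : Irreducible (X ^ p - C π : A[X]) := by
    apply irreducible_of_eisenstein_criterion (P := Ideal.span {π})
      ((Ideal.span_singleton_prime hπ.ne_zero).2 hπ)
    · rw [hmon.leadingCoeff, ← Ideal.eq_top_iff_one, Ideal.span_singleton_eq_top]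
      exact hπ.not_isUnit
    · intro n hn
      rw [degree_X_pow_sub_C hp] at hn
      have hn : n < p := by exact_mod_cast hn
      rw [coeff_sub, coeff_X_pow, if_neg hn.ne, coeff_C]
      split_ifs
      · simp
      · simp
    · rw [degree_X_pow_sub_C hp]; exact_mod_cast hp
    · rw [coeff_sub, coeff_X_pow, if_neg hp.ne, coeff_C_zero, zero_sub, neg_mem_iff,
        Ideal.span_singleton_pow, Ideal.mem_span_singleton]
      rintro ⟨c, hc⟩
      apply hπ.not_isUnit
      refine IsUnit.of_mul_eq_one c ?_
      apply mul_left_cancel₀ hπ.ne_zero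
      rw [mul_one, ← mul_assoc, ← sq]; exact hc.symm
    · exact hmon.isPrimitive
  have hirrF := (hmon.irreducible_iff_irreducible_map_fraction_map (K := F)).1 hirr
  have := minpoly.eq_of_irreducible_of_monic hirrF (x := y) (by
    simp [hy, ← IsScalarTower.algebraMap_apply]) (hmon.map _)
  have h2 := minpoly.natDegree_le (A := F) y
  rwa [← this, hmon.natDegree_map, natDegree_X_pow_sub_C] at h2

theorem exists_base (K : Type*) [Field K] [CharZero K]
    (hfg : ∃ s : Finset K, IntermediateField.adjoin ℚ (s : Set K) = ⊤)
    (s : Set K) (hs : AlgebraicIndepOn ℚ id s) :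
    ∃ t : Set K, s ⊆ t ∧ ∃ (_ : Algebra (MvPolynomial t ℚ) K)
      (_ : Algebra (FractionRing (MvPolynomial t ℚ)) K),
      (∀ i, algebraMap (MvPolynomial t ℚ) K (MvPolynomial.X i) = i) ∧
      IsScalarTower ℚ (MvPolynomial t ℚ) K ∧
      IsScalarTower (MvPolynomial t ℚ) (FractionRing (MvPolynomial t ℚ)) K ∧
      FiniteDimensional (FractionRing (MvPolynomial t ℚ)) K := by
  obtain ⟨t, hst, ht⟩ := exists_isTranscendenceBasis_superset hs
  refine ⟨t, hst, ?_⟩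
  let i1 : Algebra (MvPolynomial t ℚ) K := (MvPolynomial.aeval (R := ℚ) ((↑) : t → K)).toAlgebra
  have hinj : Function.Injective (algebraMap (MvPolynomial t ℚ) K) := ht.1
  have : FaithfulSMul (MvPolynomial t ℚ) K := (faithfulSMul_iff_algebraMap_injective _ _).2 hinj
  let i2 : Algebra (FractionRing (MvPolynomial t ℚ)) K := FractionRing.liftAlgebra _ _
  have i3 : IsScalarTower (MvPolynomial t ℚ) (FractionRing (MvPolynomial t ℚ)) K :=
    FractionRing.isScalarTower_liftAlgebra _ _
  have i4 : IsScalarTower ℚ (MvPolynomial t ℚ) K :=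
    IsScalarTower.of_algebraMap_eq fun x => by simp [RingHom.algebraMap_toAlgebra]
  refine ⟨i1, i2, fun i => by simp [RingHom.algebraMap_toAlgebra], i4, i3, ?_⟩
  have : Algebra.EssFiniteType ℚ K := IntermediateField.fg_top_iff.1 hfg
  have : IsScalarTower ℚ (FractionRing (MvPolynomial t ℚ)) K := inferInstance
  have : Algebra.EssFiniteType (FractionRing (MvPolynomial t ℚ)) K := .of_comp ℚ _ _
  have h4 : Algebra.IsAlgebraic (Algebra.adjoin ℚ (Set.range ((↑) : t → K))) K := ht.isAlgebraic
  have : Algebra.IsAlgebraic (MvPolynomial t ℚ) K := by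
    refine (Algebra.isAlgebraic_ringHom_iff_of_comp_eq ht.1.aevalEquiv (RingEquiv.refl K) ?_).1 h4
    ext i <;> simp [RingHom.algebraMap_toAlgebra]
  have : Algebra.IsAlgebraic (FractionRing (MvPolynomial t ℚ)) K := 
    (IsFractionRing.comap_isAlgebraic_iff (A := MvPolynomial t ℚ)).1 this
  exact Algebra.finite_of_essFiniteType_of_isAlgebraic

theorem exists_deg_bound (K : Type*) [Field K] [CharZero K]
    (hfg : ∃ s : Finset K, IntermediateField.adjoin ℚ (s : Set K) = ⊤) :
    ∃ d : ℕ, ∀ a : AlgebraicClosure K, IsIntegral ℚ a →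
      (minpoly ℚ a).natDegree ≤ d * (minpoly K a).natDegree := by
  obtain ⟨t, -, i1, i2, -, i3, i4, i5⟩ := exists_base K hfg ∅
    (by simpa using (algebraMap ℚ K).injective)
  refine ⟨Module.finrank (FractionRing (MvPolynomial t ℚ)) K, fun a ha => ?_⟩
  rw [← deg_eq_of_spec (A := MvPolynomial t ℚ) (F := FractionRing (MvPolynomial t ℚ))
    (MvPolynomial.aeval (fun _ => (0 : ℚ))) a ha]
  have haK : IsIntegral K a := ha.tower_top
  rw [← IntermediateField.adjoin.finrank haK]
  have : FiniteDimensional K (IntermediateField.adjoin K {a}) :=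
    IntermediateField.adjoin.finiteDimensional haK
  have : FiniteDimensional (FractionRing (MvPolynomial t ℚ)) (IntermediateField.adjoin K {a}) :=
    FiniteDimensional.trans _ K _
  rw [Module.finrank_mul_finrank]
  have h := minpoly.natDegree_le (A := FractionRing (MvPolynomial t ℚ))
    (IntermediateField.AdjoinSimple.gen K a)
  have : IsScalarTower (FractionRing (MvPolynomial t ℚ)) (IntermediateField.adjoin K {a})
      (AlgebraicClosure K) := IsScalarTower.of_algebraMap_eq fun x => rfl
  have h2 := minpoly.algebraMap_eq (A := FractionRing (MvPolynomial t ℚ))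
    (FaithfulSMul.algebraMap_injective (IntermediateField.adjoin K {a}) (AlgebraicClosure K))
    (IntermediateField.AdjoinSimple.gen K a)
  rwa [← h2, IntermediateField.AdjoinSimple.algebraMap_gen] at h

theorem finite_pow_transcendental (K : Type*) [Field K] [CharZero K]
    (hfg : ∃ s : Finset K, IntermediateField.adjoin ℚ (s : Set K) = ⊤)
    (ν : K) (hν : Transcendental ℚ ν) : ∃ d : ℕ, ∀ p : ℕ, 0 < p → ∀ y : K, y ^ p = ν → p ≤ d := by
  obtain ⟨t, ht, i1, i2, hX, i3, i4, i5⟩ := exists_base K hfg {ν}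
    ((algebraicIndependent_singleton_iff (⟨ν, rfl⟩ : ({ν} : Set K))).2 hν)
  refine ⟨Module.finrank (FractionRing (MvPolynomial t ℚ)) K, fun p hp y hy => ?_⟩
  exact pow_le_of_prime (A := MvPolynomial t ℚ) (MvPolynomial.X ⟨ν, ht rfl⟩)
    (MvPolynomial.X_prime) p hp y (by rw [hX, hy])

theorem finite_pow_numberField (k : Type*) [Field k] [NumberField k] (ν : k) (hν0 : ν ≠ 0)
    (hν : ¬ ∃ m : ℕ, 0 < m ∧ ν ^ m = 1) : {p : ℕ | 0 < p ∧ ∃ y : k, y ^ p = ν}.Finite := by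
  obtain ⟨m, hm0, hm⟩ := ((IsFractionRing.isAlgebraic_iff ℤ ℚ k).2
    (Algebra.IsAlgebraic.isAlgebraic (R := ℚ) ν)).exists_integral_multiple
  let B : ℝ := ‖(m : ℂ)‖ * ∑ φ : k →+* ℂ, (1 + ‖φ ν‖)
  have hfin := NumberField.Embeddings.finite_of_norm_le k ℂ B
  have hch : ∀ p : ℕ, ∃ y : k, (0 < p ∧ ∃ y : k, y ^ p = ν) → y ^ p = ν := by
    intro p
    by_cases h : 0 < p ∧ ∃ y : k, y ^ p = ν
    · obtain ⟨y, hy⟩ := h.2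
      exact ⟨y, fun _ => hy⟩
    · exact ⟨0, fun h' => absurd h' h⟩
  choose y hy using hch
  refine Set.Finite.of_injOn (f := fun p => (m : k) * y p) (t := _) ?_ ?_ hfin
  · intro p hp
    have hyp := hy p hp
    refine ⟨?_, fun φ => ?_⟩
    · obtain ⟨q, rfl⟩ : ∃ q, p = q + 1 := ⟨p - 1, by have := hp.1; omega⟩
      apply IsIntegral.of_pow (n := q + 1) (by omega)
      rw [mul_pow, hyp, pow_succ, mul_assoc]
      refine IsIntegral.mul ((isIntegral_algebraMap (R := ℤ) (x := m)).pow q) ?_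
      simpa using hm
    · have h1 : ‖φ (y p)‖ ^ p = ‖φ ν‖ := by rw [← norm_pow, ← map_pow, hyp]
      have h2 : ‖φ (y p)‖ ≤ 1 + ‖φ ν‖ := by
        by_contra! h
        have h3 : (1:ℝ) ≤ ‖φ (y p)‖ := by linarith [norm_nonneg (φ ν)]
        have := le_self_pow₀ h3 hp.1.ne'
        linarith
      rw [map_mul, norm_mul, map_intCast]
      refine mul_le_mul_of_nonneg_left (h2.trans ?_) (norm_nonneg _)
      exact Finset.single_le_sum (f := fun φ : k →+* ℂ => 1 + ‖φ ν‖)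
        (fun i _ => by positivity) (Finset.mem_univ φ)
  · have key : ∀ p q : ℕ, (0 < p ∧ ∃ y : k, y ^ p = ν) → (0 < q ∧ ∃ y : k, y ^ q = ν) →
        y p = y q → p < q → False := by
      intro p q hp hq h hlt
      have h1 := hy p hp
      have h2 := hy q hq
      rw [← h] at h2
      have hy0 : y p ≠ 0 := by
        intro h0
        rw [h0, zero_pow hp.1.ne'] at h1
        exact hν0 h1.symm
      have h3 : y p ^ (q - p) = 1 := by
        rw [pow_sub₀ _ hy0 hlt.le, h1, h2, mul_inv_cancel₀ hν0]
      exact hν ⟨q - p, by omega, by rw [← h1, ← pow_mul, mul_comm, pow_mul, h3, one_pow]⟩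
    intro p hp q hq h
    have h' : y p = y q := mul_left_cancel₀ (by exact_mod_cast hm0) h
    rcases lt_trichotomy p q with hlt | rfl | hlt
    · exact (key p q hp hq h' hlt).elim
    · rfl
    · exact (key q p hq hp h'.symm hlt).elim

theorem finite_pow (K : Type*) [Field K] [CharZero K]
    (hfg : ∃ s : Finset K, IntermediateField.adjoin ℚ (s : Set K) = ⊤)
    (ν : K) (hν0 : ν ≠ 0) (hν : ¬ ∃ m : ℕ, 0 < m ∧ ν ^ m = 1) :
    ∃ d : ℕ, ∀ p : ℕ, 0 < p → ∀ y : K, y ^ p = ν → p ≤ d := by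
  by_cases htr : Transcendental ℚ ν
  · exact finite_pow_transcendental K hfg ν htr
  have halg : IsAlgebraic ℚ ν := not_not.1 htr
  obtain ⟨d, hd⟩ := exists_deg_bound K hfg
  have hfd : FiniteDimensional ℚ (algebraicClosure ℚ K) := by
    by_contra hcon
    have : Algebra.IsAlgebraic ℚ (algebraicClosure ℚ K) := algebraicClosure.isAlgebraic ℚ K
    obtain ⟨L, hL, hlt⟩ := IntermediateField.exists_lt_finrank_of_infinite_dimensional hcon d
    obtain ⟨a, ha⟩ := Field.exists_primitive_element ℚ L
    have h1 := (Field.primitive_element_iff_minpoly_natDegree_eq ℚ a).1 ha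
    let b : AlgebraicClosure K := algebraMap K _ ((a : algebraicClosure ℚ K) : K)
    have hb : minpoly ℚ b = minpoly ℚ a := by
      have e1 : minpoly ℚ ((a : algebraicClosure ℚ K)) = minpoly ℚ a :=
        minpoly.algebraMap_eq (A := ℚ) (B' := algebraicClosure ℚ K) Subtype.val_injective a
      have e2 : minpoly ℚ ((a : algebraicClosure ℚ K) : K) = minpoly ℚ (a : algebraicClosure ℚ K) :=
        minpoly.algHom_eq (algebraicClosure ℚ K).val Subtype.val_injective (a : algebraicClosure ℚ K)
      rw [minpoly.algebraMap_eq (A := ℚ) (algebraMap K (AlgebraicClosure K)).injective, e2, e1]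
    have hbi : IsIntegral ℚ b := by
      have : IsIntegral ℚ a := Algebra.IsIntegral.isIntegral a
      by_contra hc
      exact minpoly.ne_zero this (hb ▸ minpoly.eq_zero hc)
    have h2 := hd b hbi
    rw [hb, h1, minpoly.eq_X_sub_C, natDegree_X_sub_C] at h2
    omega
  have : NumberField (algebraicClosure ℚ K) := ⟨⟩
  let ν' : algebraicClosure ℚ K := ⟨ν, mem_algebraicClosure_iff.2 halg⟩
  have hf := finite_pow_numberField _ ν' (fun h => hν0 (congrArg Subtype.val h))
    (fun ⟨m, hm, h⟩ => hν ⟨m, hm, by simpa [ν'] using congrArg Subtype.val h⟩)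
  obtain ⟨D, hD⟩ := hf.bddAbove
  refine ⟨D, fun p hp y hy => hD ⟨hp, ?_⟩⟩
  have hya : IsAlgebraic ℚ y := IsAlgebraic.of_pow hp (hy ▸ halg)
  exact ⟨⟨y, mem_algebraicClosure_iff.2 hya⟩, Subtype.ext (by simpa using hy)⟩

theorem dvd_factorial_of_totient_le (n B : ℕ) (hn : 0 < n) (h : n.totient ≤ B) :
    n ∣ (2 * B).factorial := by
  rw [Nat.dvd_iff_prime_pow_dvd_dvd]
  intro p k hp hk
  rcases Nat.eq_zero_or_pos k with rfl | hk0
  · simp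
  apply Nat.dvd_factorial (pow_pos hp.pos k)
  have h1 : (p ^ k).totient ≤ B :=
    (Nat.le_of_dvd (Nat.totient_pos.2 hn) (Nat.totient_dvd_of_dvd hk)).trans h
  obtain ⟨j, rfl⟩ : ∃ j, k = j + 1 := ⟨k - 1, by omega⟩
  rw [Nat.totient_prime_pow_succ hp] at h1
  have h2 : p ≤ 2 * (p - 1) := by have := hp.two_le; omega
  calc p ^ (j + 1) = p ^ j * p := pow_succ _ _
    _ ≤ p ^ j * (2 * (p - 1)) := Nat.mul_le_mul_left _ h2
    _ = 2 * (p ^ j * (p - 1)) := by ring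
    _ ≤ 2 * B := by omega

theorem totient_le_deg_rat {L : Type*} [Field L] [CharZero L] [Algebra ℚ L] (ζ : L) (n : ℕ)
    (hpos : 0 < n) (hpr : IsPrimitiveRoot ζ n) : n.totient ≤ (minpoly ℚ ζ).natDegree := by
  have hi : IsIntegral ℤ ζ := hpr.isIntegral hpos
  have h1 := hpr.totient_le_degree_minpoly
  rwa [minpoly.isIntegrallyClosed_eq_field_fractions' ℚ hi, (minpoly.monic hi).natDegree_map]

theorem finite_rootsOfUnity_set (L : Type*) [Field L] (n : ℕ) (hn : n ≠ 0) :
    (rootsOfUnity n L : Set Lˣ).Finite := by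
  have : NeZero n := ⟨hn⟩
  have h : Finite (rootsOfUnity n L) := inferInstance
  exact @Set.toFinite _ _ h

theorem exists_rootOfUnity_exponent (K : Type*) [Field K] [CharZero K]
    (hfg : ∃ s : Finset K, IntermediateField.adjoin ℚ (s : Set K) = ⊤) :
    ∃ M : ℕ, 0 < M ∧ ∀ ζ : AlgebraicClosure K, (∃ n : ℕ, 0 < n ∧ ζ ^ n = 1) →
      (minpoly K ζ).natDegree ≤ 2 → ζ ^ M = 1 := by
  obtain ⟨d, hd⟩ := exists_deg_bound K hfg
  refine ⟨(2 * (d * 2)).factorial, Nat.factorial_pos _, fun ζ hζ hdeg => ?_⟩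
  obtain ⟨n, hn, hζn⟩ := hζ
  have hfo : IsOfFinOrder ζ := isOfFinOrder_iff_pow_eq_one.2 ⟨n, hn, hζn⟩
  have hpr : IsPrimitiveRoot ζ (orderOf ζ) := IsPrimitiveRoot.orderOf ζ
  have hpos := hfo.orderOf_pos
  have h1 := totient_le_deg_rat ζ _ hpos hpr
  have h3 := hd ζ (by
    refine ⟨X ^ n - 1, monic_X_pow_sub_C 1 hn.ne', ?_⟩
    simp [hζn])
  refine orderOf_dvd_iff_pow_eq_one.1 (dvd_factorial_of_totient_le _ _ hpos ?_)
  have := Nat.mul_le_mul_left d hdeg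
  omega

theorem pow_mem_base (K : Type*) [Field K] [CharZero K] (M : ℕ)
    (hM : ∀ ζ : AlgebraicClosure K, (∃ n : ℕ, 0 < n ∧ ζ ^ n = 1) →
      (minpoly K ζ).natDegree ≤ 2 → ζ ^ M = 1) (lam : AlgebraicClosure K) (h0 : lam ≠ 0)
    (hdeg : (minpoly K lam).natDegree ≤ 2) (p : ℕ) (hp : 0 < p) (c : K)
    (hc : lam ^ p = algebraMap K _ c) : ∃ x : K, lam ^ (2 * M) = algebraMap K _ x := by
  have hi : IsIntegral K lam := Algebra.IsIntegral.isIntegral lam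
  have hpos := minpoly.natDegree_pos hi
  rcases (by omega : (minpoly K lam).natDegree = 1 ∨ (minpoly K lam).natDegree = 2) with h | h
  · obtain ⟨x, hx⟩ := minpoly.natDegree_eq_one_iff.1 h
    exact ⟨x ^ (2 * M), by rw [map_pow, hx]⟩
  have hmon := minpoly.monic hi
  set b := (minpoly K lam).coeff 1 with hb
  set e := (minpoly K lam).coeff 0 with he
  have hform : ∀ z : AlgebraicClosure K, aeval z (minpoly K lam) =
      z ^ 2 + algebraMap K _ b * z + algebraMap K _ e := by
    intro z
    have h2 : (minpoly K lam).coeff 2 = 1 := by rw [← h]; exact hmon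
    rw [aeval_eq_sum_range, h, Finset.sum_range_succ, Finset.sum_range_succ,
      Finset.sum_range_one, h2, ← hb, ← he]
    simp only [Algebra.smul_def, map_one]
    ring
  have hl := hform lam
  rw [minpoly.aeval] at hl
  set lam' := -algebraMap K (AlgebraicClosure K) b - lam with hlam'
  have hprod : lam * lam' = algebraMap K _ e := by
    rw [hlam']; linear_combination hl
  have hroot : aeval lam' (minpoly K lam) = 0 := by
    rw [hform, hlam']; linear_combination -hl
  have hdvd : minpoly K lam ∣ X ^ p - C c := minpoly.dvd _ _ (by simp [hc])
  have hlp : lam' ^ p = algebraMap K _ c := by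
    have := aeval_eq_zero_of_dvd_aeval_eq_zero hdvd hroot
    simpa [sub_eq_zero] using this
  have hz : (lam' / lam) ^ M = 1 := by
    apply hM
    · refine ⟨p, hp, ?_⟩
      rw [div_pow, hlp, ← hc, div_self (pow_ne_zero _ h0)]
    · have hmem : lam' / lam ∈ IntermediateField.adjoin K {lam} := by
        have h1 := IntermediateField.mem_adjoin_simple_self K lam
        exact div_mem (sub_mem (neg_mem (algebraMap_mem _ b)) h1) h1
      have hle : IntermediateField.adjoin K {lam' / lam} ≤ IntermediateField.adjoin K {lam} :=
        IntermediateField.adjoin_simple_le_iff.2 hmem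
      have : FiniteDimensional K (IntermediateField.adjoin K {lam}) :=
        IntermediateField.adjoin.finiteDimensional hi
      rw [← IntermediateField.adjoin.finrank (Algebra.IsIntegral.isIntegral _)]
      refine (IntermediateField.finrank_le_of_le_right hle).trans ?_
      rw [IntermediateField.adjoin.finrank hi, h]
  refine ⟨e ^ M, ?_⟩
  rw [div_pow, div_eq_one_iff_eq (pow_ne_zero _ h0)] at hz
  rw [map_pow, ← hprod, mul_pow, hz]
  ring

theorem exists_exponent (K : Type*) [Field K] (M : ℕ) (hM0 : 0 < M)
    (hM : ∀ ζ : K, (∃ n : ℕ, 0 < n ∧ ζ ^ n = 1) → ζ ^ M = 1) (μ : K) (hμ : μ ≠ 0) (d : ℕ)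
    (hd : ∀ p : ℕ, 0 < p → ∀ y : K, y ^ p = μ ^ M → p ≤ d) (x : K) (hx : x ≠ 0) (P : ℕ)
    (hP : 0 < P) (Q : ℤ) (hxP : x ^ P = μ ^ Q) : ∃ N : ℤ, x ^ (M * d.factorial) = μ ^ N := by
  obtain ⟨g, P', Q', hg, hcop, hP', hQ'⟩ : ∃ (g P' : ℕ) (Q' : ℤ), 0 < g ∧
      IsCoprime (P' : ℤ) Q' ∧ P = g * P' ∧ Q = g * Q' := by
    have hg : 0 < Int.gcd P Q := Int.gcd_pos_of_ne_zero_left _ (by omega)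
    obtain ⟨a, ha⟩ := Int.gcd_dvd_left (a := (P : ℤ)) (b := Q)
    obtain ⟨b, hb⟩ := Int.gcd_dvd_right (a := (P : ℤ)) (b := Q)
    have hapos : 0 < a := by
      by_contra! hh
      have : (Int.gcd P Q : ℤ) * a ≤ 0 := mul_nonpos_of_nonneg_of_nonpos (by positivity) hh
      omega
    lift a to ℕ using hapos.le
    refine ⟨Int.gcd P Q, a, b, hg, ?_, by exact_mod_cast ha, hb⟩
    have hbz := Int.gcd_eq_gcd_ab P Q
    refine ⟨Int.gcdA P Q, Int.gcdB P Q, ?_⟩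
    have hg' : (Int.gcd P Q : ℤ) ≠ 0 := by omega
    apply mul_left_cancel₀ hg'
    linear_combination -hbz - (Int.gcdA P Q) * ha - (Int.gcdB P Q) * hb
  have hP'0 : 0 < P' := Nat.pos_of_ne_zero (by rintro rfl; omega)
  have h1 : (x ^ P' * μ ^ (-Q')) ^ M = 1 := by
    apply hM
    refine ⟨g, hg, ?_⟩
    rw [mul_pow, ← pow_mul, mul_comm P' g, ← hP', hxP, ← zpow_natCast, ← zpow_mul, ← zpow_add₀ hμ,
      hQ', show (g : ℤ) * Q' + -Q' * g = 0 by ring, zpow_zero]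
  have h2 : (x ^ M) ^ P' = (μ ^ M) ^ Q' := by
    rw [mul_pow, zpow_neg, inv_pow, mul_inv_eq_one₀ (pow_ne_zero _ (zpow_ne_zero _ hμ))] at h1
    rw [← pow_mul, mul_comm M, pow_mul, h1, ← zpow_natCast, ← zpow_natCast, ← zpow_mul, ← zpow_mul,
      mul_comm]
  obtain ⟨a, b, hab⟩ := hcop
  have hν : μ ^ M ≠ 0 := pow_ne_zero _ hμ
  have hle : P' ≤ d := by
    apply hd P' hP'0 ((x ^ M) ^ b * (μ ^ M) ^ a)
    rw [mul_pow, ← zpow_natCast ((x ^ M) ^ b), ← zpow_natCast ((μ ^ M) ^ a), ← zpow_mul,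
      mul_comm b, zpow_mul, zpow_natCast, h2, ← zpow_mul, ← zpow_mul, ← zpow_add₀ hν,
      show Q' * b + a * P' = 1 by linear_combination hab, zpow_one]
  obtain ⟨r, hr⟩ := Nat.dvd_factorial hP'0 hle
  refine ⟨M * (Q' * r), ?_⟩
  rw [hr, pow_mul, pow_mul, h2, zpow_mul, zpow_mul, zpow_natCast, zpow_natCast]

theorem per_mu (K : Type*) [Field K] [CharZero K]
    (hfg : ∃ s : Finset K, IntermediateField.adjoin ℚ (s : Set K) = ⊤) (M : ℕ) (hM0 : 0 < M)
    (hM : ∀ ζ : AlgebraicClosure K, (∃ n : ℕ, 0 < n ∧ ζ ^ n = 1) →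
      (minpoly K ζ).natDegree ≤ 2 → ζ ^ M = 1) (μ : K) (hμ : μ ≠ 0) :
    ∃ (E : ℕ) (α : AlgebraicClosure K), 0 < E ∧ α ≠ 0 ∧ (¬ ∃ n : ℕ, 0 < n ∧ α ^ n = 1) ∧
      ∀ lam : AlgebraicClosure K, lam ≠ 0 → (minpoly K lam).natDegree ≤ 2 →
        ∀ (p : ℕ) (q : ℤ), 0 < p → lam ^ p = (algebraMap K _ μ) ^ q →
          ∃ N : ℤ, (lam / α ^ N) ^ E = 1 := by
  by_cases hroot : ∃ n : ℕ, 0 < n ∧ μ ^ n = 1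
  · obtain ⟨n, hn, hμn⟩ := hroot
    refine ⟨M, 2, hM0, two_ne_zero, ?_, fun lam _ hdeg p q hp h => ⟨0, ?_⟩⟩
    · rintro ⟨m, hm, h⟩
      have : (2 : ℕ) ^ m = 1 := by exact_mod_cast h
      exact absurd this (Nat.one_lt_two_pow hm.ne').ne'
    · rw [zpow_zero, div_one]
      refine hM lam ⟨p * n, by positivity, ?_⟩ hdeg
      rw [pow_mul, h, ← zpow_natCast, ← zpow_mul, mul_comm, zpow_mul, zpow_natCast, ← map_pow, hμn,
        map_one, one_zpow]
  have hinj : Function.Injective (algebraMap K (AlgebraicClosure K)) := RingHom.injective _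
  have hMK : ∀ ζ : K, (∃ n : ℕ, 0 < n ∧ ζ ^ n = 1) → ζ ^ M = 1 := by
    rintro ζ ⟨n, hn, h⟩
    apply hinj
    rw [map_pow, map_one]
    refine hM _ ⟨n, hn, by rw [← map_pow, h, map_one]⟩ ?_
    rw [minpoly.eq_X_sub_C, natDegree_X_sub_C]; omega
  obtain ⟨d, hd⟩ := finite_pow K hfg (μ ^ M) (pow_ne_zero _ hμ) (by
    rintro ⟨m, hm, h⟩
    exact hroot ⟨M * m, by positivity, by rw [pow_mul, h]⟩)
  have hE : 0 < 2 * M * (M * d.factorial) := by positivity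
  obtain ⟨α, hα⟩ := IsAlgClosed.exists_pow_nat_eq (algebraMap K (AlgebraicClosure K) μ) hE
  have hμ' : algebraMap K (AlgebraicClosure K) μ ≠ 0 := by simpa using hμ
  have hα0 : α ≠ 0 := by
    rintro rfl
    rw [zero_pow hE.ne'] at hα
    exact hμ' hα.symm
  refine ⟨_, α, hE, hα0, ?_, fun lam hl0 hdeg p q hp h => ?_⟩
  · rintro ⟨n, hn, h⟩
    refine hroot ⟨n, hn, hinj ?_⟩
    rw [map_pow, ← hα, ← pow_mul, mul_comm, pow_mul, h, one_pow, map_one]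
  obtain ⟨x, hx⟩ := pow_mem_base K M hM lam hl0 hdeg p hp (μ ^ q) (by rw [h, map_zpow₀])
  have hx0 : x ≠ 0 := by
    rintro rfl
    rw [map_zero] at hx
    exact pow_ne_zero _ hl0 hx
  obtain ⟨N, hN⟩ := exists_exponent K M hM0 hMK μ hμ d hd x hx0 p hp (q * (2 * M : ℕ)) (by
    apply hinj
    rw [map_pow, ← hx, map_zpow₀, zpow_mul, ← h, ← pow_mul, mul_comm, pow_mul, zpow_natCast])
  refine ⟨N, ?_⟩
  rw [div_pow, div_eq_one_iff_eq (pow_ne_zero _ (zpow_ne_zero _ hα0)), pow_mul, hx, ← map_pow, hN,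
    map_zpow₀, ← hα, ← zpow_natCast, ← zpow_natCast, ← zpow_mul, ← zpow_mul, mul_comm]

end Aux

/-- Let `K` be a finitely generated field extension of `ℚ` with algebraic closure `K̄`,
`S ⊂ K*` finite, and `Λ ⊆ K̄*` such that each `λ ∈ Λ` has degree at most `2` over `K` and
satisfies `λ^p = μ^q` for some `μ ∈ S` and nonzero integers `p, q`. Then there are a finite
subgroup `W ⊂ K̄*` and a finite set `S' ⊂ K̄*` of non-roots-of-unity such that every
`λ ∈ Λ` has the form `α^N·w` with `α ∈ S'`, `N ∈ ℤ`, `w ∈ W`. -/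
theorem exists_finite_W_and_S'
    (K : Type*) [Field K] [CharZero K]
    (hfg : ∃ s : Finset K, IntermediateField.adjoin ℚ (s : Set K) = ⊤)
    (S : Finset K) (hS : ∀ μ ∈ S, μ ≠ 0)
    (Λ : Set (AlgebraicClosure K)) (hΛ0 : ∀ lam ∈ Λ, lam ≠ 0)
    (hdeg : ∀ lam ∈ Λ, Module.finrank K (IntermediateField.adjoin K {lam}) ≤ 2)
    (hdep : ∀ lam ∈ Λ, ∃ μ ∈ S, ∃ p q : ℤ, p ≠ 0 ∧ q ≠ 0 ∧
      lam ^ p = (algebraMap K (AlgebraicClosure K) μ) ^ q) :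
    ∃ (W : Subgroup (AlgebraicClosure K)ˣ) (S' : Finset (AlgebraicClosure K)),
      (W : Set (AlgebraicClosure K)ˣ).Finite ∧
      (∀ α ∈ S', α ≠ 0 ∧ ¬ IsRootOfUnity α) ∧
      ∀ lam ∈ Λ, ∃ α ∈ S', ∃ N : ℤ, ∃ w ∈ W,
        lam = α ^ N * ((w : (AlgebraicClosure K)ˣ) : AlgebraicClosure K) := by
  classical
  obtain ⟨M, hM0, hM⟩ := exists_rootOfUnity_exponent K hfg
  have hper := fun μ (h : μ ∈ S) => per_mu K hfg M hM0 hM μ (hS μ h)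
  choose! E α hE hα0 hα hmain using hper
  have hT : ∏ μ ∈ S, E μ ≠ 0 := Finset.prod_ne_zero_iff.2 fun μ h => (hE μ h).ne'
  refine ⟨rootsOfUnity (∏ μ ∈ S, E μ) (AlgebraicClosure K), S.image α, ?_, ?_, ?_⟩
  · exact finite_rootsOfUnity_set _ _ hT
  · intro a ha
    obtain ⟨μ, hμ, rfl⟩ := Finset.mem_image.1 ha
    exact ⟨hα0 μ hμ, hα μ hμ⟩
  intro lam hl
  obtain ⟨μ, hμ, p, q, hp, -, h⟩ := hdep lam hl
  have hdeg' : (minpoly K lam).natDegree ≤ 2 := by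
    rw [← IntermediateField.adjoin.finrank (Algebra.IsIntegral.isIntegral lam)]
    exact hdeg lam hl
  obtain ⟨P, Q, hP, hPQ⟩ : ∃ (P : ℕ) (Q : ℤ), 0 < P ∧
      lam ^ P = (algebraMap K (AlgebraicClosure K) μ) ^ Q := by
    rcases lt_or_gt_of_ne hp with hneg | hpos
    · refine ⟨(-p).toNat, -q, by omega, ?_⟩
      rw [← zpow_natCast, Int.toNat_of_nonneg (by omega), zpow_neg, zpow_neg, h]
    · refine ⟨p.toNat, q, by omega, ?_⟩
      rw [← zpow_natCast, Int.toNat_of_nonneg hpos.le, h]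
  obtain ⟨N, hN⟩ := hmain μ hμ lam (hΛ0 lam hl) hdeg' P Q hP hPQ
  have hαN : α μ ^ N ≠ 0 := zpow_ne_zero _ (hα0 μ hμ)
  refine ⟨α μ, Finset.mem_image_of_mem α hμ, N,
    Units.mk0 (lam / α μ ^ N) (div_ne_zero (hΛ0 lam hl) hαN), ?_, ?_⟩
  · rw [mem_rootsOfUnity]
    obtain ⟨r, hr⟩ := Finset.dvd_prod_of_mem E hμ
    apply Units.ext
    rw [Units.val_pow_eq_pow_val, Units.val_mk0, Units.val_one, hr, pow_mul, hN, one_pow]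
  · rw [Units.val_mk0, mul_div_cancel₀ _ hαN]
end

section
/- There exists a discrete subgroup Γ of SL₂(ℂ) such that both quotient spaces SL₂(ℂ)/Γ and SL₂(ℝ)/(SL₂(ℝ) ∩ Γ) are compact. -/
namespace CocompactAux
open Matrix MeasureTheory

noncomputable def redHom : GaussianInt →+* ZMod 5 := Zsqrtd.lift ⟨2, by decide⟩

lemma redHom_apply (x : GaussianInt) : redHom x = (x.re : ZMod 5) + x.im * 2 := by
  simp [redHom]

def piG : GaussianInt := ⟨2, -1⟩
def piB : GaussianInt := ⟨2, 1⟩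

lemma redHom_zero {x : GaussianInt} (h : redHom x = 0) : ∃ y, x = piG * y := by
  rw [redHom_apply] at h
  have h' : ((x.re + x.im * 2 : ℤ) : ZMod 5) = 0 := by push_cast; exact h
  rw [ZMod.intCast_zmod_eq_zero_iff_dvd] at h'
  obtain ⟨k, hk⟩ := h'
  push_cast at hk
  refine ⟨⟨2 * k - x.im, k⟩, ?_⟩
  apply Zsqrtd.ext <;> simp [piG] <;> linarith

lemma zmod_aniso : ∀ a b : ZMod 5, a ^ 2 - 2 * b ^ 2 = 0 → a = 0 ∧ b = 0 := by decide

lemma zmod_aniso' : ∀ c a b : ZMod 5, c ≠ 0 → c * (a ^ 2 - 2 * b ^ 2) = 0 → a = 0 ∧ b = 0 := by decide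

lemma form_aniso_aux (n : ℕ) : ∀ x y z w : GaussianInt,
    (x.norm + y.norm + z.norm + w.norm) = n →
    x ^ 2 - 2 * y ^ 2 - 5 * (z ^ 2 - 2 * w ^ 2) = 0 → x = 0 ∧ y = 0 ∧ z = 0 ∧ w = 0 := by
  induction n using Nat.strong_induction_on with
  | _ n ih =>
  intro x y z w hn h
  have h5 : (5 : GaussianInt) = piG * piB := by decide
  have hpi : piG ≠ 0 := by decide
  have r5 : redHom 5 = 0 := by
    rw [map_ofNat]; decide
  have rB : redHom piB ≠ 0 := by
    rw [redHom_apply]; decide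
  have e1 := congrArg redHom h
  simp only [map_sub, map_mul, map_pow, r5, map_ofNat, map_zero, zero_mul, sub_zero] at e1
  obtain ⟨hx, hy⟩ := zmod_aniso _ _ e1
  obtain ⟨x', rfl⟩ := redHom_zero hx
  obtain ⟨y', rfl⟩ := redHom_zero hy
  have h2 : piG * (x' ^ 2 - 2 * y' ^ 2) - piB * (z ^ 2 - 2 * w ^ 2) = 0 := by
    apply mul_left_cancel₀ hpi
    rw [h5] at h
    linear_combination h
  have rG : redHom piG = 0 := by
    rw [redHom_apply]; decide
  have e2 := congrArg redHom h2
  simp only [map_sub, map_mul, map_pow, rG, map_ofNat, map_zero, zero_mul, zero_sub,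
    neg_eq_zero] at e2
  obtain ⟨hz, hw⟩ := zmod_aniso' _ _ _ rB e2
  obtain ⟨z', rfl⟩ := redHom_zero hz
  obtain ⟨w', rfl⟩ := redHom_zero hw
  have nG : piG.norm = 5 := by decide
  simp only [Zsqrtd.norm_mul, nG] at hn
  have hx0 := GaussianInt.norm_nonneg x'
  have hy0 := GaussianInt.norm_nonneg y'
  have hz0 := GaussianInt.norm_nonneg z'
  have hw0 := GaussianInt.norm_nonneg w'
  by_cases hn0 : n = 0
  · subst hn0
    have a1 : x'.norm = 0 := by push_cast at hn; linarith
    have a2 : y'.norm = 0 := by push_cast at hn; linarith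
    have a3 : z'.norm = 0 := by push_cast at hn; linarith
    have a4 : w'.norm = 0 := by push_cast at hn; linarith
    rw [GaussianInt.norm_eq_zero] at a1 a2 a3 a4
    simp [a1, a2, a3, a4]
  · have hlt : (x'.norm + y'.norm + z'.norm + w'.norm).toNat < n := by omega
    obtain ⟨a1, a2, a3, a4⟩ := ih _ hlt x' y' z' w' (by omega) (by
      apply mul_left_cancel₀ (pow_ne_zero 2 hpi)
      linear_combination h)
    simp [a1, a2, a3, a4]

lemma form_aniso {x y z w : GaussianInt}
    (h : x ^ 2 - 2 * y ^ 2 - 5 * (z ^ 2 - 2 * w ^ 2) = 0) : x = 0 ∧ y = 0 ∧ z = 0 ∧ w = 0 := by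
  have hx0 := GaussianInt.norm_nonneg x
  have hy0 := GaussianInt.norm_nonneg y
  have hz0 := GaussianInt.norm_nonneg z
  have hw0 := GaussianInt.norm_nonneg w
  exact form_aniso_aux (x.norm + y.norm + z.norm + w.norm).toNat x y z w (by omega) h

lemma form_aniso_int {x y z w : ℤ}
    (h : x ^ 2 - 2 * y ^ 2 - 5 * (z ^ 2 - 2 * w ^ 2) = 0) : x = 0 ∧ y = 0 ∧ z = 0 ∧ w = 0 := by
  have := @form_aniso x y z w (by exact_mod_cast congrArg (Int.cast : ℤ → GaussianInt) h)
  exact_mod_cast this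


attribute [local instance] Matrix.normedAddCommGroup Matrix.normedSpace

lemma exists_finite_reps {α β : Type*} [Finite β] (f : α → β) (A : Set α) :
    ∃ S ⊆ A, S.Finite ∧ ∀ x ∈ A, ∃ s ∈ S, f s = f x := by
  obtain ⟨S, hS, hb⟩ := Set.exists_subset_bijOn A f
  refine ⟨S, hS, ?_, ?_⟩
  · exact Set.Finite.of_finite_image (Set.toFinite _) hb.injOn
  · intro x hx
    obtain ⟨s, hs, h⟩ := hb.surjOn (Set.mem_image_of_mem f hx)
    exact ⟨s, hs, h⟩

lemma det_mulLeft_matrix {F : Type*} [Field F] (g : Matrix (Fin 2) (Fin 2) F) :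
    LinearMap.det (LinearMap.mulLeft F g) = g.det ^ 2 := by
  rw [← LinearMap.det_toMatrix (Matrix.stdBasis F (Fin 2) (Fin 2))]
  have : LinearMap.toMatrix (Matrix.stdBasis F (Fin 2) (Fin 2))
    (Matrix.stdBasis F (Fin 2) (Fin 2)) (LinearMap.mulLeft F g) =
      Matrix.kroneckerMap (· * ·) g (1 : Matrix (Fin 2) (Fin 2) F) := by
    ext ⟨i, j⟩ ⟨k, l⟩
    rw [LinearMap.toMatrix_apply, Matrix.stdBasis_eq_single]
    simp [Matrix.stdBasis, Matrix.mul_apply, Matrix.single_apply, Matrix.one_apply]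
    fin_cases k <;> simp [eq_comm]
  rw [this, Matrix.det_kronecker]
  simp

lemma det_mulLeft_real {F : Type*} [RCLike F] (g : Matrix (Fin 2) (Fin 2) F) (hg : g.det = 1) :
    LinearMap.det (LinearMap.mulLeft ℝ g) = 1 := by
  have : LinearMap.mulLeft ℝ g = (LinearMap.mulLeft F g).restrictScalars ℝ := rfl
  rw [this, LinearMap.det_restrictScalars, det_mulLeft_matrix, hg]
  simp

lemma minkowski_linear {E : Type*} [NormedAddCommGroup E] [NormedSpace ℝ E] [Nontrivial E]
    {ι : Type*} [Fintype ι] (b : Module.Basis ι ℝ E) :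
    ∃ r : ℝ, ∀ f : E →ₗ[ℝ] E, LinearMap.det f = 1 →
      ∃ x ∈ Submodule.span ℤ (Set.range b), x ≠ 0 ∧ ‖f x‖ ≤ r := by
  let _ : MeasurableSpace E := borel _
  have : BorelSpace E := ⟨rfl⟩
  have : FiniteDimensional ℝ E := Module.Basis.finiteDimensional_of_finite b
  have : ProperSpace E := FiniteDimensional.proper ℝ _
  let μ : Measure E := Measure.addHaar
  have hfin : μ (ZSpan.fundamentalDomain b) * 2 ^ (Module.finrank ℝ E) < ⊤ :=
    ENNReal.mul_lt_top (ZSpan.fundamentalDomain_isBounded b).measure_lt_top (by finiteness)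
  have huniv : μ Set.univ = ⊤ := by
    have : NoncompactSpace E := NormedSpace.noncompactSpace ℝ _
    exact measure_univ_of_isAddLeftInvariant μ
  have htend := tendsto_measure_iUnion_atTop (μ := μ)
    (s := fun n : ℕ => Metric.closedBall (0 : E) n)
    (fun m n h => Metric.closedBall_subset_closedBall (by exact_mod_cast h))
  rw [Metric.iUnion_closedBall_nat, huniv] at htend
  obtain ⟨n, hn⟩ := (Filter.Tendsto.eventually_const_lt hfin htend).exists
  refine ⟨n, fun f hdet => ?_⟩
  have : Countable (Submodule.span ℤ (Set.range b)).toAddSubgroup :=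
    inferInstanceAs (Countable (Submodule.span ℤ (Set.range b)))
  obtain ⟨x, hx0, hx⟩ := exists_ne_zero_mem_lattice_of_measure_mul_two_pow_lt_measure
    (L := (Submodule.span ℤ (Set.range b)).toAddSubgroup)
    (s := f ⁻¹' Metric.closedBall 0 n) (ZSpan.isAddFundamentalDomain' b μ)
    (by intro x hx; simpa using hx)
    ((convex_closedBall _ _).linear_preimage _)
    (by
      rw [Measure.addHaar_preimage_linearMap μ (by rw [hdet]; exact one_ne_zero), hdet]
      simpa using hn)
  refine ⟨x, x.2, by simpa using hx0, ?_⟩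
  simpa using hx

lemma span_inter_compact_finite {E : Type*} [NormedAddCommGroup E] [NormedSpace ℝ E]
    {ι : Type*} [Fintype ι] (b : Module.Basis ι ℝ E) {s : Set E} (hs : IsCompact s) :
    Set.Finite (s ∩ Submodule.span ℤ (Set.range b)) := by
  have : FiniteDimensional ℝ E := Module.Basis.finiteDimensional_of_finite b
  have : ProperSpace E := FiniteDimensional.proper ℝ _
  exact ZSpan.setFinite_inter b hs.isBounded

lemma isCompact_closedBall_of_basis {E : Type*} [NormedAddCommGroup E] [NormedSpace ℝ E]
    {ι : Type*} [Fintype ι] (b : Module.Basis ι ℝ E) (r : ℝ) :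
    IsCompact (Metric.closedBall (0 : E) r) := by
  have : FiniteDimensional ℝ E := Module.Basis.finiteDimensional_of_finite b
  have : ProperSpace E := FiniteDimensional.proper ℝ _
  exact isCompact_closedBall _ _

lemma discrete_span {E : Type*} [NormedAddCommGroup E] [NormedSpace ℝ E]
    {ι : Type*} [Fintype ι] (b : Module.Basis ι ℝ E) :
    DiscreteTopology (Submodule.span ℤ (Set.range b)) := inferInstance

lemma finite_mod {F : Type*} [RCLike F] {ι : Type*} [Fintype ι]
    (b : Module.Basis ι ℝ (Matrix (Fin 2) (Fin 2) F)) (N : ℤ) (hN : N ≠ 0)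
    (A : Set (Matrix (Fin 2) (Fin 2) F)) (hA : ∀ x ∈ A, x ∈ Submodule.span ℤ (Set.range b)) :
    ∃ S ⊆ A, S.Finite ∧ ∀ x ∈ A, ∃ s ∈ S, ∃ z ∈ Submodule.span ℤ (Set.range b),
      x - s = N • z := by
  have : NeZero N.natAbs := ⟨by simpa using hN⟩
  obtain ⟨S, hSA, hS, h⟩ := exists_finite_reps
    (fun x i => ((⌊b.repr x i⌋ : ℤ) : ZMod N.natAbs)) A
  refine ⟨S, hSA, hS, fun x hx => ?_⟩
  obtain ⟨s, hs, hsx⟩ := h x hx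
  have key : ∀ i, ∃ k : ℤ, b.repr x i - b.repr s i = N * k := by
    intro i
    obtain ⟨u, hu⟩ := (b.mem_span_iff_repr_mem ℤ x).1 (hA x hx) i
    obtain ⟨v, hv⟩ := (b.mem_span_iff_repr_mem ℤ s).1 (hA s (hSA hs)) i
    have h1 := congrFun hsx i
    simp only [← hu, ← hv] at h1
    simp at h1
    rw [ZMod.intCast_eq_intCast_iff_dvd_sub] at h1
    rw [Int.natCast_natAbs, abs_dvd] at h1
    obtain ⟨k, hk⟩ := h1
    refine ⟨k, ?_⟩
    rw [← hu, ← hv]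
    simp
    exact_mod_cast hk
  choose k hk using key
  refine ⟨s, hs, ∑ i, k i • b i, ?_, ?_⟩
  · exact Submodule.sum_mem _ fun i _ => Submodule.smul_mem _ _ (Submodule.subset_span ⟨i, rfl⟩)
  · apply b.repr.injective
    classical
    ext i
    simp [Finsupp.single_apply, hk, ← Int.cast_smul_eq_zsmul ℝ]

lemma main_compact {F : Type*} [RCLike F] {ι : Type*} [Fintype ι]
    (b : Module.Basis ι ℝ (Matrix (Fin 2) (Fin 2) F)) (L : Submodule ℤ (Matrix (Fin 2) (Fin 2) F))
    (hL : L = Submodule.span ℤ (Set.range b))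
    (hone : 1 ∈ L) (hmul : ∀ x ∈ L, ∀ y ∈ L, x * y ∈ L)
    (hadj : ∀ x ∈ L, x.adjugate ∈ L) (hdet : ∀ x ∈ L, x ≠ 0 → x.det ≠ 0)
    (hN : ∀ x ∈ L, x ≠ 0 → ∃ N : ℤ, N ≠ 0 ∧ ∃ m : F, x.det * m = N ∧
      m • (1 : Matrix (Fin 2) (Fin 2) F) ∈ L) :
    ∃ K : Set (Matrix (Fin 2) (Fin 2) F), IsCompact K ∧
      ∀ g : Matrix (Fin 2) (Fin 2) F, g.det = 1 → ∃ γ ∈ L, γ.det = 1 ∧ g * γ ∈ K := by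
  obtain ⟨r, hr⟩ := minkowski_linear b
  have hB := isCompact_closedBall_of_basis b r
  set B := Metric.closedBall (0 : Matrix (Fin 2) (Fin 2) F) r with hBdef
  have hdcont : Continuous (fun m : Matrix (Fin 2) (Fin 2) F =>
      m.det • (1 : Matrix (Fin 2) (Fin 2) F)) :=
    (continuous_id.matrix_det).smul continuous_const
  have hD := span_inter_compact_finite b (hB.image hdcont)
  rw [← hL] at hD
  let T : Set F := {d | d ≠ 0 ∧ d • (1 : Matrix (Fin 2) (Fin 2) F) ∈
    (fun m : Matrix (Fin 2) (Fin 2) F => m.det • (1 : Matrix (Fin 2) (Fin 2) F)) '' B ∩ L}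
  have hT : T.Finite := by
    refine Set.Finite.subset (Set.Finite.preimage (f := fun d : F =>
      d • (1 : Matrix (Fin 2) (Fin 2) F)) ?_ hD) (fun d hd => hd.2)
    intro d _ d' _ h
    have := congrFun (congrFun h 0) 0
    simpa using this
  have hS : ∀ d : F, ∃ S : Set (Matrix (Fin 2) (Fin 2) F), d ≠ 0 →
      (∀ s ∈ S, s ∈ L ∧ s.det = d) ∧ S.Finite ∧
      ∀ x ∈ L, x.det = d → ∃ s ∈ S, ∃ z ∈ L, x - s = d • z := by
    intro d
    by_cases hex : d ≠ 0 ∧ ∃ x ∈ L, x.det = d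
    · obtain ⟨hd, x₀, hx₀, hx₀d⟩ := hex
      have hx₀0 : x₀ ≠ 0 := by
        rintro rfl
        apply hd
        rw [← hx₀d]
        simp
      obtain ⟨N, hN0, m, hm, hmL⟩ := hN x₀ hx₀ hx₀0
      obtain ⟨S, hSA, hSf, h⟩ := finite_mod b N hN0 {x | x ∈ L ∧ x.det = d}
        (fun x hx => hL ▸ hx.1)
      refine ⟨S, fun _ => ⟨fun s hs => hSA hs, hSf, fun x hx hxd => ?_⟩⟩
      obtain ⟨s, hs, z, hz, hxs⟩ := h x ⟨hx, hxd⟩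
      rw [← hL] at hz
      refine ⟨s, hs, _, hmul _ hmL _ hz, ?_⟩
      rw [hxs, smul_mul_assoc, one_mul, smul_smul, ← hx₀d, hm, Int.cast_smul_eq_zsmul]
    · refine ⟨∅, fun hd => ⟨by simp, Set.finite_empty, fun x hx hxd => ?_⟩⟩
      exact absurd ⟨hd, x, hx, hxd⟩ hex
  choose S hS using hS
  refine ⟨⋃ d ∈ T, ⋃ s ∈ S d, (fun m => m * s⁻¹) '' B, ?_, ?_⟩
  · refine hT.isCompact_biUnion fun d hd => (hS d hd.1).2.1.isCompact_biUnion fun s _ => ?_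
    exact hB.image (continuous_id.matrix_mul continuous_const)
  · intro g hg
    obtain ⟨x, hx, hx0, hgx⟩ := hr _ (det_mulLeft_real g hg)
    rw [← hL] at hx
    rw [LinearMap.mulLeft_apply] at hgx
    have hd0 := hdet x hx hx0
    have hgxB : g * x ∈ B := by simpa [hBdef] using hgx
    have hdT : x.det ∈ T := by
      refine ⟨hd0, ⟨g * x, hgxB, ?_⟩, ?_⟩
      · simp [Matrix.det_mul, hg]
      · rw [← Matrix.mul_adjugate]
        exact hmul _ hx _ (hadj _ hx)
    obtain ⟨h1, -, h2⟩ := hS x.det hd0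
    obtain ⟨s, hs, z, hz, hxs⟩ := h2 x hx rfl
    obtain ⟨hsL, hsd⟩ := h1 s hs
    have hsu : IsUnit s.det := by rw [hsd]; exact hd0.isUnit
    refine ⟨x * s⁻¹, ?_, ?_, ?_⟩
    · have : x * s⁻¹ = 1 + z * s.adjugate := by
        rw [sub_eq_iff_eq_add.1 hxs, add_mul, Matrix.mul_nonsing_inv _ hsu, add_comm,
          Matrix.inv_def, hsd, smul_mul_assoc, mul_smul_comm, smul_smul, Ring.mul_inverse_cancel _ hd0.isUnit,
          one_smul]
      rw [this]
      exact L.add_mem hone (hmul _ hz _ (hadj _ hsL))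
    · rw [Matrix.det_mul, Matrix.det_nonsing_inv, hsd, Ring.mul_inverse_cancel _ hd0.isUnit]
    · simp only [Set.mem_iUnion]
      exact ⟨x.det, hdT, s, hs, g * x, hgxB, by simp [Matrix.mul_assoc]⟩

lemma compact_quotient {F : Type*} [RCLike F] [τ : TopologicalSpace (SpecialLinearGroup (Fin 2) F)]
    (hτ : τ = TopologicalSpace.induced (fun g : SpecialLinearGroup (Fin 2) F => (g : Matrix (Fin 2) (Fin 2) F)) inferInstance)
    (Γ : Subgroup (SpecialLinearGroup (Fin 2) F))
    (K : Set (Matrix (Fin 2) (Fin 2) F)) (hK : IsCompact K)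
    (h : ∀ g : SpecialLinearGroup (Fin 2) F, ∃ γ ∈ Γ,
      (g : Matrix (Fin 2) (Fin 2) F) * (γ : Matrix (Fin 2) (Fin 2) F) ∈ K) :
    CompactSpace (SpecialLinearGroup (Fin 2) F ⧸ Γ) := by
  have hemb : Topology.IsClosedEmbedding
      (fun g : SpecialLinearGroup (Fin 2) F => (g : Matrix (Fin 2) (Fin 2) F)) := by
    refine ⟨⟨⟨hτ⟩, Subtype.val_injective⟩, ?_⟩
    have : Set.range (fun g : SpecialLinearGroup (Fin 2) F => (g : Matrix (Fin 2) (Fin 2) F)) =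
        {m | m.det = 1} := Subtype.range_coe
    rw [this]
    exact isClosed_eq continuous_id.matrix_det continuous_const
  have hK' := hemb.isCompact_preimage hK
  refine ⟨?_⟩
  have := hK'.image (f := (QuotientGroup.mk : _ → SpecialLinearGroup (Fin 2) F ⧸ Γ))
    continuous_quotient_mk'
  convert this
  symm
  rw [Set.eq_univ_iff_forall]
  intro q
  obtain ⟨g, rfl⟩ := QuotientGroup.mk_surjective q
  obtain ⟨γ, hγ, hgγ⟩ := h g
  refine ⟨g * γ, by simpa using hgγ, ?_⟩
  exact QuotientGroup.mk_mul_of_mem g hγ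

lemma discrete_subgroup {F : Type*} [RCLike F] [τ : TopologicalSpace (SpecialLinearGroup (Fin 2) F)]
    (hτ : τ = TopologicalSpace.induced (fun g : SpecialLinearGroup (Fin 2) F => (g : Matrix (Fin 2) (Fin 2) F)) inferInstance)
    (Γ : Subgroup (SpecialLinearGroup (Fin 2) F)) {ι : Type*} [Fintype ι]
    (b : Module.Basis ι ℝ (Matrix (Fin 2) (Fin 2) F))
    (h : ∀ γ ∈ Γ, (γ : Matrix (Fin 2) (Fin 2) F) ∈ Submodule.span ℤ (Set.range b)) :
    DiscreteTopology Γ := by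
  have hd := discrete_span b
  have hc : Continuous (fun g : SpecialLinearGroup (Fin 2) F => (g : Matrix (Fin 2) (Fin 2) F)) := by
    rw [hτ]; exact continuous_induced_dom
  let f : Γ → Submodule.span ℤ (Set.range b) := fun γ => ⟨_, h γ.1 γ.2⟩
  have hf : Continuous f := Continuous.subtype_mk (hc.comp continuous_subtype_val) _
  refine @DiscreteTopology.of_continuous_injective _ _ _ _ hd f hf ?_
  intro x y hxy
  have := congrArg Subtype.val hxy
  exact Subtype.ext (Subtype.ext this)



section Order

variable {F : Type*} [RCLike F] {R : Type*} [CommRing R]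

/-- The matrix of the quaternion `x + y i + z j + w k` in the algebra `(2, 5)`. -/
def qmat (t : F) (x y z w : F) : Matrix (Fin 2) (Fin 2) F :=
  !![x + t * y, 5 * (z + t * w); z - t * w, x - t * y]

def qEquiv (t : F) (ht : t ^ 2 = 2) : Matrix (Fin 2) (Fin 2) F ≃ₗ[F] (Fin 4 → F) where
  toFun m := ![(m 0 0 + m 1 1) / 2, t * (m 0 0 - m 1 1) / 4, (m 0 1 / 5 + m 1 0) / 2,
    t * (m 0 1 / 5 - m 1 0) / 4]
  invFun v := qmat t (v 0) (v 1) (v 2) (v 3)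
  map_add' m n := by
    ext i; fin_cases i <;> simp <;> ring
  map_smul' a m := by
    ext i; fin_cases i <;> simp <;> ring
  left_inv m := by
    ext i j; fin_cases i <;> fin_cases j <;> simp [qmat]
    · linear_combination (m 0 0 - m 1 1) / 4 * ht
    · linear_combination 5 * (m 0 1 / 5 - m 1 0) / 4 * ht
    · linear_combination -(m 0 1 / 5 - m 1 0) / 4 * ht
    · linear_combination -(m 0 0 - m 1 1) / 4 * ht
  right_inv v := by
    ext i; fin_cases i <;> simp [qmat]
    · linear_combination v 1 / 2 * ht
    · linear_combination v 3 / 2 * ht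

noncomputable def qBasis (t : F) (ht : t ^ 2 = 2) {κ : Type*} (c : Module.Basis κ ℝ F) :
    Module.Basis (κ × Fin 4) ℝ (Matrix (Fin 2) (Fin 2) F) :=
  c.smulTower (Module.Basis.ofEquivFun (qEquiv t ht))

lemma mem_qspan (t : F) (ht : t ^ 2 = 2) {κ : Type*} (c : Module.Basis κ ℝ F)
    (φ : R →+* F) (hc : ∀ a : F, a ∈ Submodule.span ℤ (Set.range c) ↔ ∃ u, φ u = a)
    (m : Matrix (Fin 2) (Fin 2) F) :
    m ∈ Submodule.span ℤ (Set.range (qBasis t ht c)) ↔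
      ∃ x y z w : R, m = qmat t (φ x) (φ y) (φ z) (φ w) := by
  rw [Module.Basis.mem_span_iff_repr_mem]
  have h1 : (∀ i, (qBasis t ht c).repr m i ∈ Set.range (algebraMap ℤ ℝ)) ↔
      ∀ j, ∃ u, φ u = qEquiv t ht m j := by
    simp only [← hc, Module.Basis.mem_span_iff_repr_mem]
    constructor
    · intro h j i
      simpa [qBasis, Module.Basis.smulTower_repr] using h (i, j)
    · rintro h ⟨i, j⟩
      simpa [qBasis, Module.Basis.smulTower_repr] using h j i
  rw [h1]
  constructor
  · intro h
    choose u hu using h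
    refine ⟨u 0, u 1, u 2, u 3, ?_⟩
    rw [hu, hu, hu, hu]
    exact ((qEquiv t ht).symm_apply_apply m).symm
  · rintro ⟨x, y, z, w, rfl⟩ j
    have : qEquiv t ht (qmat t (φ x) (φ y) (φ z) (φ w)) = ![φ x, φ y, φ z, φ w] :=
      (qEquiv t ht).apply_symm_apply ![φ x, φ y, φ z, φ w]
    rw [this]
    fin_cases j
    exacts [⟨x, rfl⟩, ⟨y, rfl⟩, ⟨z, rfl⟩, ⟨w, rfl⟩]

lemma qmat_det (t : F) (ht : t ^ 2 = 2) (φ : R →+* F) (x y z w : R) :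
    (qmat t (φ x) (φ y) (φ z) (φ w)).det =
      φ (x ^ 2 - 2 * y ^ 2 - 5 * (z ^ 2 - 2 * w ^ 2)) := by
  have h2 : φ 2 = 2 := map_ofNat φ 2
  have h5 : φ 5 = 5 := map_ofNat φ 5
  simp [qmat, Matrix.det_fin_two, h2, h5]
  linear_combination (5 * φ w ^ 2 - φ y ^ 2) * ht

lemma qmat_mul (t : F) (ht : t ^ 2 = 2) (φ : R →+* F) (x y z w x' y' z' w' : R) :
    qmat t (φ x) (φ y) (φ z) (φ w) * qmat t (φ x') (φ y') (φ z') (φ w') =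
      qmat t (φ (x * x' + 2 * y * y' + 5 * (z * z' - 2 * w * w')))
        (φ (x * y' + y * x' + 5 * (w * z' - z * w')))
        (φ (x * z' + 2 * y * w' + z * x' - 2 * w * y'))
        (φ (x * w' + y * z' + w * x' - z * y')) := by
  have h2 : φ 2 = 2 := map_ofNat φ 2
  have h5 : φ 5 = 5 := map_ofNat φ 5
  ext i j
  fin_cases i <;> fin_cases j <;> simp [qmat, Matrix.mul_apply, h2, h5]
  · linear_combination (φ y * φ y' - 5 * φ w * φ w') * ht
  · linear_combination 5 * (φ y * φ w' - φ w * φ y') * ht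
  · linear_combination (φ y * φ w' - φ w * φ y') * ht
  · linear_combination (φ y * φ y' - 5 * φ w * φ w') * ht

lemma qmat_adj (t : F) (φ : R →+* F) (x y z w : R) :
    (qmat t (φ x) (φ y) (φ z) (φ w)).adjugate =
      qmat t (φ x) (φ (-y)) (φ (-z)) (φ (-w)) := by
  ext i j
  fin_cases i <;> fin_cases j <;> simp [qmat, Matrix.adjugate_fin_two] <;> ring

lemma qmat_scalar (t : F) (φ : R →+* F) (x : R) :
    qmat t (φ x) (φ 0) (φ 0) (φ 0) = φ x • (1 : Matrix (Fin 2) (Fin 2) F) := by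
  ext i j
  fin_cases i <;> fin_cases j <;> simp [qmat]

lemma q_compact (t : F) (ht : t ^ 2 = 2) {κ : Type*} [Fintype κ] (c : Module.Basis κ ℝ F)
    (φ : R →+* F) (hφ : Function.Injective φ)
    (hc : ∀ a : F, a ∈ Submodule.span ℤ (Set.range c) ↔ ∃ u, φ u = a)
    (han : ∀ x y z w : R, x ^ 2 - 2 * y ^ 2 - 5 * (z ^ 2 - 2 * w ^ 2) = 0 →
      x = 0 ∧ y = 0 ∧ z = 0 ∧ w = 0)
    (hR : ∀ u : R, u ≠ 0 → ∃ v : R, ∃ N : ℤ, N ≠ 0 ∧ u * v = N) :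
    ∃ K : Set (Matrix (Fin 2) (Fin 2) F), IsCompact K ∧
      ∀ g : Matrix (Fin 2) (Fin 2) F, g.det = 1 →
        ∃ x y z w : R, (qmat t (φ x) (φ y) (φ z) (φ w)).det = 1 ∧
          g * qmat t (φ x) (φ y) (φ z) (φ w) ∈ K := by
  have hmem := mem_qspan t ht c φ hc
  have hd : ∀ x y z w : R, qmat t (φ x) (φ y) (φ z) (φ w) ≠ 0 →
      x ^ 2 - 2 * y ^ 2 - 5 * (z ^ 2 - 2 * w ^ 2) ≠ 0 := by
    intro x y z w h h0
    obtain ⟨rfl, rfl, rfl, rfl⟩ := han x y z w h0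
    apply h
    rw [qmat_scalar]
    simp
  obtain ⟨K, hK, h⟩ := main_compact (qBasis t ht c) _ rfl
    ((hmem _).2 ⟨1, 0, 0, 0, by rw [qmat_scalar]; simp⟩)
    (by
      intro x hx y hy
      rw [hmem] at *
      obtain ⟨x, y, z, w, rfl⟩ := hx
      obtain ⟨x', y', z', w', rfl⟩ := hy
      exact ⟨_, _, _, _, qmat_mul t ht φ _ _ _ _ _ _ _ _⟩)
    (by
      intro x hx
      rw [hmem] at *
      obtain ⟨x, y, z, w, rfl⟩ := hx
      exact ⟨_, _, _, _, qmat_adj t φ _ _ _ _⟩)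
    (by
      intro x hx hx0
      obtain ⟨x, y, z, w, rfl⟩ := (hmem _).1 hx
      rw [qmat_det t ht]
      exact (map_ne_zero_iff φ hφ).2 (hd _ _ _ _ hx0))
    (by
      intro x hx hx0
      obtain ⟨x, y, z, w, rfl⟩ := (hmem _).1 hx
      rw [qmat_det t ht]
      obtain ⟨v, N, hN, hv⟩ := hR _ (hd _ _ _ _ hx0)
      refine ⟨N, hN, φ v, ?_, ?_⟩
      · rw [← map_mul, hv, map_intCast]
      · rw [hmem]
        exact ⟨_, _, _, _, (qmat_scalar t φ v).symm⟩)
  refine ⟨K, hK, fun g hg => ?_⟩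
  obtain ⟨γ, hγ, hγ1, hγK⟩ := h g hg
  obtain ⟨x, y, z, w, rfl⟩ := (hmem _).1 hγ
  exact ⟨x, y, z, w, hγ1, hγK⟩

/-- The norm one group of the order. -/
def qGroup (t : F) (ht : t ^ 2 = 2) (φ : R →+* F) : Subgroup (SpecialLinearGroup (Fin 2) F) where
  carrier := {g | ∃ x y z w : R, (g : Matrix (Fin 2) (Fin 2) F) = qmat t (φ x) (φ y) (φ z) (φ w)}
  one_mem' := ⟨1, 0, 0, 0, by rw [qmat_scalar]; simp⟩
  mul_mem' := by
    rintro a b ⟨x, y, z, w, h⟩ ⟨x', y', z', w', h'⟩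
    exact ⟨_, _, _, _, (Matrix.SpecialLinearGroup.coe_mul a b).trans (by rw [h, h', qmat_mul t ht])⟩
  inv_mem' := by
    rintro a ⟨x, y, z, w, h⟩
    exact ⟨_, _, _, _, (Matrix.SpecialLinearGroup.coe_inv a).trans (by rw [h, qmat_adj])⟩

end Order

lemma real_span (a : ℝ) : a ∈ Submodule.span ℤ (Set.range (Module.Basis.singleton Unit ℝ)) ↔
    ∃ u : ℤ, Int.castRingHom ℝ u = a := by
  rw [Module.Basis.mem_span_iff_repr_mem]
  simp

lemma complex_span (a : ℂ) : a ∈ Submodule.span ℤ (Set.range Complex.basisOneI) ↔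
    ∃ u : GaussianInt, GaussianInt.toComplex u = a := by
  rw [Module.Basis.mem_span_iff_repr_mem]
  simp only [Fin.forall_fin_two]
  constructor
  · rintro ⟨⟨u, hu⟩, ⟨v, hv⟩⟩
    refine ⟨⟨u, v⟩, ?_⟩
    apply Complex.ext
    · simpa using hu
    · simpa using hv
  · rintro ⟨u, rfl⟩
    exact ⟨⟨u.re, by simp⟩, ⟨u.im, by simp⟩⟩

end CocompactAux

open CocompactAux

/-- The standard topology on `SL₂(ℂ)`, induced from the space of matrices. -/
noncomputable instance : TopologicalSpace (Matrix.SpecialLinearGroup (Fin 2) ℂ) :=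
  TopologicalSpace.induced
    (fun g => (g : Matrix (Fin 2) (Fin 2) ℂ)) inferInstance

/-- The standard topology on `SL₂(ℝ)`, induced from the space of matrices. -/
noncomputable instance : TopologicalSpace (Matrix.SpecialLinearGroup (Fin 2) ℝ) :=
  TopologicalSpace.induced
    (fun g => (g : Matrix (Fin 2) (Fin 2) ℝ)) inferInstance

/-- There exists a discrete subgroup `Γ` of `SL₂(ℂ)` such that both `SL₂(ℂ)/Γ` and
`SL₂(ℝ)/(SL₂(ℝ) ∩ Γ)` are compact. -/
theorem exists_discrete_cocompact_with_real_cocompact_intersection :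
    ∃ Γ : Subgroup (Matrix.SpecialLinearGroup (Fin 2) ℂ),
      DiscreteTopology Γ ∧
      CompactSpace (Matrix.SpecialLinearGroup (Fin 2) ℂ ⧸ Γ) ∧
      CompactSpace (Matrix.SpecialLinearGroup (Fin 2) ℝ ⧸
        (Γ.comap (Matrix.SpecialLinearGroup.map Complex.ofRealHom))) := by
  have htR : (√2 : ℝ) ^ 2 = 2 := Real.sq_sqrt (by norm_num)
  have htC : ((√2 : ℝ) : ℂ) ^ 2 = 2 := by exact_mod_cast htR
  refine ⟨qGroup _ htC GaussianInt.toComplex, ?_, ?_, ?_⟩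
  · refine discrete_subgroup rfl _ (qBasis _ htC Complex.basisOneI) ?_
    intro γ hγ
    exact (mem_qspan _ htC _ _ complex_span _).2 hγ
  · obtain ⟨K, hK, h⟩ := q_compact _ htC Complex.basisOneI GaussianInt.toComplex
      GaussianInt.toComplex_injective complex_span (fun _ _ _ _ => form_aniso)
      (fun u hu => ⟨star u, u.norm, fun h0 => hu (GaussianInt.norm_eq_zero.1 h0),
        (Zsqrtd.norm_eq_mul_conj u).symm⟩)
    refine compact_quotient rfl _ K hK fun g => ?_
    obtain ⟨x, y, z, w, h1, h2⟩ := h g g.det_coe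
    exact ⟨⟨_, h1⟩, ⟨x, y, z, w, rfl⟩, h2⟩
  · obtain ⟨K, hK, h⟩ := q_compact _ htR (Module.Basis.singleton Unit ℝ) (Int.castRingHom ℝ)
      Int.cast_injective real_span (fun _ _ _ _ => form_aniso_int)
      (fun u hu => ⟨1, u, hu, by simp⟩)
    refine compact_quotient rfl _ K hK fun g => ?_
    obtain ⟨x, y, z, w, h1, h2⟩ := h g g.det_coe
    refine ⟨⟨_, h1⟩, ⟨x, y, z, w, ?_⟩, h2⟩
    change (qmat √2 (Int.castRingHom ℝ x) (Int.castRingHom ℝ y) (Int.castRingHom ℝ z)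
      (Int.castRingHom ℝ w)).map Complex.ofRealHom = _
    ext i j
    fin_cases i <;> fin_cases j <;> simp [qmat]
end
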